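/- arXiv:2109.07845 — 3 statements merged into one kernel-verified Lean document; each statement's English description precedes it below -/
import Mathlib

section
/- With the brace setup below (n ≥ 5), let i, k, ℓ ∈ {1,…,n−1} and a_1, …, a_{n−3} ∈ {1,…,n−1} with i ∈ {a_1, …, a_{n−3}}. Then for every permutation τ ∈ S_{n−3} we have {i, a_{τ(1)}, …, a_{τ(n−3)}, k, ℓ} = sign(τ) · {i, a_1, …, a_{n−3}, k, ℓ}. -/
open MvPolynomial

/-- The row vector `P(a_1,a_2)·(∂φ_2/∂x_{a_3})⋯(∂φ_{r+1}/∂x_{a_{r+2}})` (0-based: the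
sequence `c` is indexed from 0, `φ r` is the paper's `φ_{r+1}`). -/
noncomputable def braceVec {K : Type*} [Field K] {N : ℕ} {b : ℕ → ℕ}
    (φ : ∀ r : ℕ, Matrix (Fin (b r)) (Fin (b (r + 1))) (MvPolynomial (Fin N) K))
    (P : Fin N → Fin N → Fin (b 1) → K)
    (c : ℕ → Fin N) : ∀ r : ℕ, Fin (b (r + 1)) → MvPolynomial (Fin N) K
  | 0 => fun q => C (P (c 0) (c 1) q)
  | (r + 1) => Matrix.vecMul (braceVec φ P c r)
      (fun p q => pderiv (c (r + 2)) (φ (r + 1) p q))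

/-- The brace symbol `{a_1 a_2 ⋯ a_n} = P(a_1,a_2)·(∂φ_2/∂x_{a_3})⋯(∂φ_{m−1}/∂x_{a_{n−2}})
·Q(a_{n−1},a_n)` (a scalar, realized as a constant polynomial). Here `nn` is the paper's
`n`, `m = nn − 2`, and `h` records `m − 1 = m − 2 + 1`. -/
noncomputable def braceFn {K : Type*} [Field K] {N : ℕ} {b : ℕ → ℕ}
    (φ : ∀ r : ℕ, Matrix (Fin (b r)) (Fin (b (r + 1))) (MvPolynomial (Fin N) K))
    (P : Fin N → Fin N → Fin (b 1) → K)
    (m : ℕ) (Q : Fin N → Fin N → Fin (b (m - 1)) → K) (h : m - 1 = m - 2 + 1)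
    (nn : ℕ) (c : ℕ → Fin N) : MvPolynomial (Fin N) K :=
  ∑ p : Fin (b (m - 1)),
    braceVec φ P c (m - 2) (Fin.cast (congrArg b h) p) * C (Q (c (nn - 2)) (c (nn - 1)) p)

/-!
For linear `A`, `B` with `A * B = 0`, applying `∂ᵢ∂ⱼ` gives `∂ᵢA ∂ⱼB + ∂ⱼA ∂ᵢB = 0`, so the brace
changes sign when two adjacent entries, both from the third onwards, are exchanged. The coefficient
of `xᵢ²xⱼ` in `φ₁ φ₂ = 0` gives `P(i,i) ∂ⱼφ₂ + P(i,j) ∂ᵢφ₂ = 0`, that is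
`{i,i,j,…} = -{i,j,i,…}`. If `i` stands further to the right, exchanges of the first kind bring it
to the fourth entry, and there the braid relation gives
`{i,a,b,i,…} = -{i,a,i,b,…} = {i,i,a,b,…} = -{i,i,b,a,…} = {i,b,i,a,…} = -{i,b,a,i,…}`.
-/

section SignedPermutation

open Equiv Equiv.Perm

variable {α β γ : Type*} [AddCommGroup γ]

theorem viaEmbedding_swap [DecidableEq α] [DecidableEq β] (e : α ↪ β) (i j : α) :
    (swap i j).viaEmbedding e = swap (e i) (e j) := by
  ext x
  by_cases hx : x ∈ Set.range e
  · obtain ⟨t, rfl⟩ := hx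
    rw [viaEmbedding_apply, e.injective.swap_apply]
  · rw [viaEmbedding_apply_of_notMem _ _ _ hx, swap_apply_of_ne_of_ne] <;>
      exact fun h => hx ⟨_, h.symm⟩

theorem apply_comp_viaEmbedding_eq_sign_smul [DecidableEq β] {M : ℕ} (e : Fin M ↪ β)
    (f : (β → α) → γ) (S : Set (β → α))
    (hS : ∀ c ∈ S, ∀ σ : Perm (Fin M), c ∘ σ.viaEmbedding e ∈ S)
    (hf : ∀ c ∈ S, ∀ i j : Fin M, (i : ℕ) + 1 = j → f (c ∘ swap (e i) (e j)) = -f c)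
    (τ : Perm (Fin M)) {c : β → α} (hc : c ∈ S) :
    f (c ∘ τ.viaEmbedding e) = (sign τ : ℤ) • f c := by
  cases M with
  | zero => simp [Subsingleton.elim τ 1, ← viaEmbeddingHom_apply]
  | succ M =>
    have hτ : τ ∈ Submonoid.closure (Set.range fun i : Fin M => swap i.castSucc i.succ) :=
      mclosure_swap_castSucc_succ M ▸ Submonoid.mem_top τ
    induction hτ using Submonoid.closure_induction generalizing c with
    | mem _ hx =>
      obtain ⟨i, rfl⟩ := hx
      rw [viaEmbedding_swap, hf c hc _ _ rfl, sign_swap i.castSucc_lt_succ.ne]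
      simp
    | one => simp [← viaEmbeddingHom_apply]
    | mul x y _ _ ihx ihy =>
      have hxy : c ∘ (x * y).viaEmbedding e = (c ∘ x.viaEmbedding e) ∘ y.viaEmbedding e := by
        simp only [← viaEmbeddingHom_apply, map_mul, Perm.coe_mul, Function.comp_assoc]
      rw [hxy, ihy (hS c hc x), ihx hc, smul_smul, Perm.sign_mul, mul_comm (sign x), Units.val_mul]

theorem apply_comp_swap_one_two_eq_neg_of_three {f : (ℕ → α) → γ}
    (h_tail : ∀ c, f (c ∘ swap 2 3) = -f c)
    (h_head : ∀ c, c 1 = c 0 ∨ c 2 = c 0 → f (c ∘ swap 1 2) = -f c)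
    {c : ℕ → α} (hc : c 3 = c 0) : f (c ∘ swap 1 2) = -f c := by
  have braid : (swap 1 2 : Perm ℕ) * swap 2 3 * swap 1 2 = swap 2 3 * swap 1 2 * swap 2 3 := by
    rw [swap_mul_swap_mul_swap (by decide) (by decide), swap_comm 1 2, swap_comm 2 3,
      swap_mul_swap_mul_swap (by decide) (by decide), swap_comm]
  have h_left : (c ∘ swap 1 2 ∘ swap 2 3) 2 = (c ∘ swap 1 2 ∘ swap 2 3) 0 := hc
  have h_right : (c ∘ swap 2 3) 2 = (c ∘ swap 2 3) 0 := hc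
  calc f (c ∘ swap 1 2)
      = f (c ∘ (swap 1 2 * swap 2 3 * swap 1 2 : Perm ℕ)) := by
        simp only [Perm.coe_mul, ← Function.comp_assoc] at h_left ⊢
        rw [h_head _ (.inr h_left), h_tail, neg_neg]
    _ = f (c ∘ (swap 2 3 * swap 1 2 * swap 2 3 : Perm ℕ)) := by rw [braid]
    _ = -f c := by
        simp only [Perm.coe_mul, ← Function.comp_assoc]
        rw [h_tail, h_head _ (.inr h_right), h_tail, neg_neg]

theorem apply_comp_swap_one_two_eq_neg {f : (ℕ → α) → γ} {M : ℕ}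
    (h_tail : ∀ c s, 2 ≤ s → s + 1 ≤ M → f (c ∘ swap s (s + 1)) = -f c)
    (h_head : ∀ c, c 1 = c 0 ∨ c 2 = c 0 → f (c ∘ swap 1 2) = -f c)
    {c : ℕ → α} {s : ℕ} (hs : 1 ≤ s) (hsM : s ≤ M) (hc : c s = c 0) :
    f (c ∘ swap 1 2) = -f c := by
  induction s, hs using Nat.le_induction generalizing c with
  | base => exact h_head c (.inl hc)
  | succ s hs ih =>
    obtain rfl | rfl | hs3 : s = 1 ∨ s = 2 ∨ 3 ≤ s := by omega
    · exact h_head c (.inr hc)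
    · exact apply_comp_swap_one_two_eq_neg_of_three (h_tail · 2 le_rfl hsM) h_head hc
    · have hcomm : (c ∘ swap 1 2) ∘ swap s (s + 1) = (c ∘ swap s (s + 1)) ∘ swap 1 2 := by
        have hmul : swap 1 2 * swap s (s + 1) = swap s (s + 1) * swap 1 2 := by
          rw [swap_mul_eq_mul_swap, swap_inv, swap_apply_of_ne_of_ne, swap_apply_of_ne_of_ne] <;>
            omega
        rw [Function.comp_assoc, ← Perm.coe_mul, hmul, Perm.coe_mul, Function.comp_assoc]
      have hs' : (c ∘ swap s (s + 1)) s = (c ∘ swap s (s + 1)) 0 := by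
        simpa [swap_apply_of_ne_of_ne (show 0 ≠ s by omega)] using hc
      have hih := ih (by omega) hs'
      rwa [← hcomm, h_tail _ s (by omega) hsM, h_tail _ s (by omega) hsM, neg_inj] at hih

/-- The inclusion of the positions `1, …, M` into those of a sequence indexed from `0`; the letters
being permuted are numbered by `Fin M`, so that the `t`-th one stands at position `1 + t`. -/
def positionEmbedding (M : ℕ) : Fin M ↪ ℕ :=
  Fin.valEmbedding.trans (addLeftEmbedding 1)

theorem positionEmbedding_apply {M : ℕ} (t : Fin M) : positionEmbedding M t = 1 + t :=
  rfl

theorem positionEmbedding_pred {M r : ℕ} (hr : 1 ≤ r) (hrM : r - 1 < M) :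
    positionEmbedding M ⟨r - 1, hrM⟩ = r :=
  Nat.add_sub_cancel' hr

theorem permute_eq_comp_viaEmbedding {M : ℕ} (c : ℕ → α) (τ : Perm (Fin M)) :
    (fun r => if h : 1 ≤ r ∧ r - 1 < M then c (1 + (τ ⟨r - 1, h.2⟩ : ℕ)) else c r)
      = c ∘ τ.viaEmbedding (positionEmbedding M) := by
  funext r
  split_ifs with h
  · rw [← positionEmbedding_apply, ← viaEmbedding_apply, positionEmbedding_pred h.1,
      Function.comp_apply]
  · rw [Function.comp_apply, viaEmbedding_apply_of_notMem]
    rintro ⟨t, rfl⟩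
    rw [positionEmbedding_apply] at h
    omega

theorem apply_permute_eq_sign_smul {f : (ℕ → α) → γ} {M : ℕ}
    (h_tail : ∀ c s, 2 ≤ s → s + 1 ≤ M → f (c ∘ swap s (s + 1)) = -f c)
    (h_head : ∀ c, c 1 = c 0 ∨ c 2 = c 0 → f (c ∘ swap 1 2) = -f c)
    {c : ℕ → α} (hc : ∃ s, 1 ≤ s ∧ s ≤ M ∧ c s = c 0) (τ : Perm (Fin M)) :
    f (fun r => if h : 1 ≤ r ∧ r - 1 < M then c (1 + (τ ⟨r - 1, h.2⟩ : ℕ)) else c r)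
      = (sign τ : ℤ) • f c := by
  rw [permute_eq_comp_viaEmbedding]
  refine apply_comp_viaEmbedding_eq_sign_smul _ f
    {c | ∃ s, 1 ≤ s ∧ s ≤ M ∧ c s = c 0} ?_ ?_ τ hc
  · rintro c ⟨s, hs, hsM, hcs⟩ σ
    have h0 : σ.viaEmbedding (positionEmbedding M) 0 = 0 :=
      viaEmbedding_apply_of_notMem _ _ _ (by simp [positionEmbedding_apply])
    set t : Fin M := ⟨s - 1, by omega⟩
    have ht : positionEmbedding M t = s := positionEmbedding_pred hs _
    refine ⟨positionEmbedding M (σ⁻¹ t), ?_, ?_, ?_⟩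
    · simp [positionEmbedding_apply]
    · rw [positionEmbedding_apply]
      omega
    · simp [viaEmbedding_apply, h0, ht, hcs]
  · rintro c ⟨s, hs, hsM, hcs⟩ i j hij
    have hj : (1 + j : ℕ) = 1 + i + 1 := by omega
    rw [positionEmbedding_apply, positionEmbedding_apply, hj]
    obtain hi | hi := Nat.eq_zero_or_pos (i : ℕ)
    · rw [hi]
      exact apply_comp_swap_one_two_eq_neg h_tail h_head hs hsM hcs
    · exact h_tail c _ (by omega) (by omega)

end SignedPermutation

section Derivatives

variable {σ R ι κ l : Type*} [CommSemiring R]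

theorem pderiv_eq_C_eval_single_of_isHomogeneous_one [DecidableEq σ] {p : MvPolynomial σ R}
    (hp : p.IsHomogeneous 1) (a : σ) : pderiv a p = C (eval (Pi.single a 1) p) := by
  have hspan : p ∈ Submodule.span R (Set.range (X : σ → MvPolynomial σ R)) :=
    homogeneousSubmodule_one_eq_span_X (R := R) (σ := σ) ▸ hp
  clear hp
  induction hspan using Submodule.span_induction with
  | mem _ h =>
    obtain ⟨i, rfl⟩ := h
    simp [pderiv_X, Pi.single_apply]
  | zero => simp
  | add _ _ _ _ hx hy => simp [hx, hy]
  | smul _ _ _ hx => simp [hx, smul_eq_C_mul]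

theorem pderiv_pderiv_eq_zero_of_isHomogeneous_one {p : MvPolynomial σ R}
    (hp : p.IsHomogeneous 1) (i j : σ) : pderiv i (pderiv j p) = 0 := by
  classical rw [pderiv_eq_C_eval_single_of_isHomogeneous_one hp, pderiv_C]

theorem map_pderiv_mul_map_pderiv_add_swap [Fintype κ]
    {A : Matrix ι κ (MvPolynomial σ R)} {B : Matrix κ l (MvPolynomial σ R)}
    (hA : ∀ p q, (A p q).IsHomogeneous 1) (hB : ∀ p q, (B p q).IsHomogeneous 1)
    (hAB : A * B = 0) (i j : σ) :
    A.map (pderiv i) * B.map (pderiv j) + A.map (pderiv j) * B.map (pderiv i) = 0 := by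
  ext1 p q
  have h := congrArg (fun t => pderiv i (pderiv j t)) (congrFun₂ hAB p q)
  simp only [Matrix.mul_apply, Matrix.zero_apply, map_sum, Derivation.leibniz, smul_eq_mul, map_add,
    map_zero, pderiv_pderiv_eq_zero_of_isHomogeneous_one (hA _ _),
    pderiv_pderiv_eq_zero_of_isHomogeneous_one (hB _ _), mul_zero, zero_add] at h
  simpa only [Matrix.add_apply, Matrix.mul_apply, Matrix.map_apply, Matrix.zero_apply, mul_comm,
    Finset.sum_add_distrib] using h

variable [Fintype σ] [LinearOrder σ]

/-- The quadratic polynomial with coefficient `P i j` at `x_i x_j` for `i ≤ j`; the values `P i j`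
with `j < i` do not enter. It encodes the entries of `φ_1`. -/
noncomputable def quadraticPoly (P : σ → σ → R) : MvPolynomial σ R :=
  ∑ i, ∑ j, if i ≤ j then C (P i j) * X i * X j else 0

theorem eval_single_quadraticPoly (P : σ → σ → R) (i : σ) :
    eval (Pi.single i 1) (quadraticPoly P) = P i i := by
  simp only [quadraticPoly, map_sum]
  rw [Finset.sum_eq_single i, Finset.sum_eq_single i]
  · simp
  · intro j _ hj; split_ifs <;> simp [hj]
  · simp
  · intro j _ hj; exact Finset.sum_eq_zero fun k _ => by split_ifs <;> simp [hj]
  · simp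

theorem pderiv_quadraticPoly {P : σ → σ → R} (hP : ∀ i j, P i j = P j i) (j : σ) :
    pderiv j (quadraticPoly P) = ∑ k, C (P j k) * X k + C (P j j) * X j := by
  have hterm (i k : σ) : pderiv j (if i ≤ k then C (P i k) * X i * X k else 0) =
      (if i = j then if j ≤ k then C (P j k) * X k else 0 else 0) +
      (if k = j then if i ≤ j then C (P j i) * X i else 0 else 0) := by
    by_cases hik : i ≤ k
    · by_cases hi : i = j <;> by_cases hk : k = j <;>
      simp_all [pderiv_X, mul_comm]
    · split_ifs <;> simp_all
  have hsplit (k : σ) : (if j ≤ k then C (P j k) * X k else 0) +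
      (if k ≤ j then C (P j k) * X k else 0) =
      C (P j k) * X k + if k = j then C (P j j) * X j else 0 := by
    rcases lt_trichotomy j k with h | rfl | h
    · simp [h.le, h.not_ge, h.ne']
    · simp
    · simp [h.le, h.not_ge, h.ne]
  simp only [quadraticPoly, map_sum, hterm, Finset.sum_add_distrib]
  rw [Finset.sum_comm]
  simp only [Finset.sum_ite_eq', Finset.mem_univ, if_true, ← Finset.sum_add_distrib, hsplit]
  simp only [Finset.sum_add_distrib, Finset.sum_ite_eq', Finset.mem_univ, if_true]

theorem eval_single_pderiv_quadraticPoly {P : σ → σ → R} (hP : ∀ i j, P i j = P j i) {i j : σ}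
    (hij : i ≠ j) : eval (Pi.single i 1) (pderiv j (quadraticPoly P)) = P i j := by
  simp [pderiv_quadraticPoly hP, Pi.single_apply, hij.symm, hP i j]

theorem sum_C_mul_pderiv_add_swap [Fintype κ] {P : σ → σ → κ → R} (hP : ∀ i j, P i j = P j i)
    {g : κ → MvPolynomial σ R} (hg : ∀ q, (g q).IsHomogeneous 1)
    (h : ∑ q, quadraticPoly (P · · q) * g q = 0) (i j : σ) :
    ∑ q, C (P i j q) * pderiv i (g q) + ∑ q, C (P i i q) * pderiv j (g q) = 0 := by
  have hPq (q : κ) (i j : σ) : P i j q = P j i q := congrFun (hP i j) q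
  obtain rfl | hij := eq_or_ne i j
  · -- Evaluation at `eᵢ` alone: differentiating first would introduce a factor `3`.
    have hi : ∑ q, C (P i i q) * pderiv i (g q) = 0 := by
      simpa [eval_single_quadraticPoly, pderiv_eq_C_eval_single_of_isHomogeneous_one (hg _)]
        using congrArg (fun t => C (σ := σ) (eval (Pi.single i 1) t)) h
    rw [hi, add_zero]
  · simpa [eval_single_quadraticPoly, eval_single_pderiv_quadraticPoly (hPq _) hij,
      pderiv_eq_C_eval_single_of_isHomogeneous_one (hg _), Finset.sum_add_distrib, mul_comm]
      using congrArg (fun t => C (σ := σ) (eval (Pi.single i 1) (pderiv j t))) h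

end Derivatives

section Brace

open Equiv

variable {K : Type*} [Field K] {N : ℕ} {b : ℕ → ℕ}
  {φ : ∀ r : ℕ, Matrix (Fin (b r)) (Fin (b (r + 1))) (MvPolynomial (Fin N) K)}
  {P : Fin N → Fin N → Fin (b 1) → K}

theorem braceVec_succ (c : ℕ → Fin N) (r : ℕ) :
    braceVec φ P c (r + 1)
      = Matrix.vecMul (braceVec φ P c r) ((φ (r + 1)).map (pderiv (c (r + 2)))) :=
  rfl

theorem braceVec_congr {c d : ℕ → Fin N} {r : ℕ} (h : ∀ s ≤ r + 1, c s = d s) :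
    braceVec φ P c r = braceVec φ P d r := by
  induction r with
  | zero => simp only [braceVec, h 0 (by omega), h 1 (by omega)]
  | succ r ih => rw [braceVec_succ, braceVec_succ, ih fun s hs => h s (by omega), h (r + 2) le_rfl]

theorem braceVec_eq_neg_of_le {c d : ℕ → Fin N} {r₀ r : ℕ} (hr : r₀ ≤ r)
    (hcd : ∀ s, r₀ + 2 ≤ s → c s = d s) (h : braceVec φ P c r₀ = -braceVec φ P d r₀) :
    braceVec φ P c r = -braceVec φ P d r := by
  induction r, hr using Nat.le_induction with
  | base => exact h
  | succ r hr ih =>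
    rw [braceVec_succ, braceVec_succ, ih, hcd (r + 2) (by omega), Matrix.neg_vecMul]

theorem braceVec_comp_swap_tail {k r : ℕ} (hr : k + 2 ≤ r)
    (hcomp : φ (k + 1) * φ (k + 1 + 1) = 0)
    (hdeg : ∀ p q, (φ (k + 1) p q).IsHomogeneous 1)
    (hdeg' : ∀ p q, (φ (k + 1 + 1) p q).IsHomogeneous 1) (c : ℕ → Fin N) :
    braceVec φ P (c ∘ swap (k + 2) (k + 3)) r = -braceVec φ P c r := by
  refine braceVec_eq_neg_of_le hr
    (fun t ht => congrArg c (swap_apply_of_ne_of_ne (by omega) (by omega))) ?_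
  have hprefix : braceVec φ P (c ∘ swap (k + 2) (k + 3)) k = braceVec φ P c k :=
    braceVec_congr fun t ht => congrArg c (swap_apply_of_ne_of_ne (by omega) (by omega))
  rw [eq_neg_iff_add_eq_zero]
  simp only [braceVec_succ, hprefix, Function.comp_apply, swap_apply_left, swap_apply_right,
    Matrix.vecMul_vecMul, ← Matrix.vecMul_add]
  rw [map_pderiv_mul_map_pderiv_add_swap hdeg hdeg' hcomp, Matrix.vecMul_zero]

theorem braceVec_comp_swap_head (hb0 : 0 < b 0)
    (hcomp : φ 0 * φ 1 = 0) (hdeg : ∀ p q, (φ 1 p q).IsHomogeneous 1)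
    (hPsymm : ∀ i j, P i j = P j i) (hP : ∀ p q, φ 0 p q = quadraticPoly (P · · q))
    {c : ℕ → Fin N} (hc : c 1 = c 0 ∨ c 2 = c 0) {r : ℕ} (hr : 1 ≤ r) :
    braceVec φ P (c ∘ swap 1 2) r = -braceVec φ P c r := by
  refine braceVec_eq_neg_of_le hr
    (fun t ht => congrArg c (swap_apply_of_ne_of_ne (by omega) (by omega))) ?_
  have hrel (i j : Fin N) :
      Matrix.vecMul (fun q => C (P i j q)) ((φ 1).map (pderiv i)) +
      Matrix.vecMul (fun q => C (P i i q)) ((φ 1).map (pderiv j)) = 0 := by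
    ext1 q
    refine sum_C_mul_pderiv_add_swap hPsymm (fun p => hdeg p q) ?_ i j
    simpa only [Matrix.mul_apply, hP, Matrix.zero_apply] using congrFun₂ hcomp ⟨0, hb0⟩ q
  have hbrace (d : ℕ → Fin N) : braceVec φ P d 1
      = Matrix.vecMul (fun q => C (P (d 0) (d 1) q)) ((φ 1).map (pderiv (d 2))) := rfl
  have h0 : swap 1 2 0 = 0 := by decide
  rw [eq_neg_iff_add_eq_zero, hbrace, hbrace]
  simp only [Function.comp_apply, swap_apply_left, swap_apply_right, h0]
  rcases hc with hc | hc <;> rw [hc]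
  · exact hrel _ _
  · exact (add_comm _ _).trans (hrel _ _)

theorem braceFn_eq_neg {m n : ℕ} {Q : Fin N → Fin N → Fin (b (m - 1)) → K}
    {h : m - 1 = m - 2 + 1} {c d : ℕ → Fin N}
    (hvec : braceVec φ P c (m - 2) = -braceVec φ P d (m - 2))
    (h₂ : c (n - 2) = d (n - 2)) (h₁ : c (n - 1) = d (n - 1)) :
    braceFn φ P m Q h n c = -braceFn φ P m Q h n d := by
  simp only [braceFn, hvec, h₂, h₁, Pi.neg_apply, neg_mul, Finset.sum_neg_distrib]

end Brace

theorem stmt12_general {K : Type*} [Field K] {N n m : ℕ} (hn : 5 ≤ n) (hm : m = n - 2)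
    {b : ℕ → ℕ} (hb0 : 0 < b 0)
    {φ : ∀ r : ℕ, Matrix (Fin (b r)) (Fin (b (r + 1))) (MvPolynomial (Fin N) K)}
    (hcomp : ∀ r, r + 3 ≤ m → φ r * φ (r + 1) = 0)
    (hdegmid : ∀ r, 1 ≤ r → r + 2 ≤ m → ∀ p q, (φ r p q).IsHomogeneous 1)
    {P : Fin N → Fin N → Fin (b 1) → K} (hPsymm : ∀ i j, P i j = P j i)
    (hP : ∀ p q, φ 0 p q = quadraticPoly (P · · q))
    (Q : Fin N → Fin N → Fin (b (m - 1)) → K)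
    {c : ℕ → Fin N} (hi : ∃ s, 1 ≤ s ∧ s ≤ n - 3 ∧ c s = c 0) (τ : Equiv.Perm (Fin (n - 3))) :
    braceFn φ P m Q (by omega) n
        (fun r => if h : 1 ≤ r ∧ r - 1 < n - 3 then c (1 + (τ ⟨r - 1, h.2⟩ : ℕ)) else c r)
      = (Equiv.Perm.sign τ : ℤ) • braceFn φ P m Q (by omega) n c := by
  refine apply_permute_eq_sign_smul (fun c s hs hsn => ?_) (fun c hc => ?_) hi τ
  · obtain ⟨k, rfl⟩ := Nat.exists_eq_add_of_le' hs
    refine braceFn_eq_neg (braceVec_comp_swap_tail (by omega) (hcomp _ (by omega))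
      (hdegmid _ (by omega) (by omega)) (hdegmid _ (by omega) (by omega)) c) ?_ ?_ <;>
    exact congrArg c (Equiv.swap_apply_of_ne_of_ne (by omega) (by omega))
  · refine braceFn_eq_neg (braceVec_comp_swap_head hb0 (hcomp 0 (by omega))
      (hdegmid 1 le_rfl (by omega)) hPsymm hP hc (by omega)) ?_ ?_ <;>
    exact congrArg c (Equiv.swap_apply_of_ne_of_ne (by omega) (by omega))

/-- In the brace setup (`n ≥ 5`), if the first entry `i` occurs among the
middle `n − 3` entries `a_1, …, a_{n−3}` then the brace symbol is alternating in those
entries: `{i, a_{τ(1)}, …, a_{τ(n−3)}, k, ℓ} = sign(τ)·{i, a_1, …, a_{n−3}, k, ℓ}`.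
(0-based: the middle entries occupy positions `1, …, n − 3` of the sequence `c`.) -/
theorem stmt12 (K : Type*) [Field K] (n : ℕ) (hn : 5 ≤ n) (m : ℕ) (hm : m = n - 2)
    (b : ℕ → ℕ) (hbpos : ∀ r, r ≤ m → 0 < b r) (hb0 : b 0 = 1) (hbm : b m = 1)
    (φ : ∀ r : ℕ, Matrix (Fin (b r)) (Fin (b (r + 1))) (MvPolynomial (Fin (n - 1)) K))
    (hcomp : ∀ r, r + 2 ≤ m → φ r * φ (r + 1) = 0)
    (hdeg1 : ∀ p q, (φ 0 p q).IsHomogeneous 2)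
    (hdegm : ∀ p q, (φ (m - 1) p q).IsHomogeneous 2)
    (hdegmid : ∀ r, 1 ≤ r → r + 2 ≤ m → ∀ p q, (φ r p q).IsHomogeneous 1)
    (P : Fin (n - 1) → Fin (n - 1) → Fin (b 1) → K)
    (Q : Fin (n - 1) → Fin (n - 1) → Fin (b (m - 1)) → K)
    (hPsymm : ∀ i j, P i j = P j i) (hQsymm : ∀ i j, Q i j = Q j i)
    (hP : ∀ (p : Fin (b 0)) (q : Fin (b 1)),
      φ 0 p q = ∑ i : Fin (n - 1), ∑ j : Fin (n - 1),
        if i ≤ j then C (P i j q) * X i * X j else 0)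
    (hQ : ∀ (p : Fin (b (m - 1))) (q : Fin (b (m - 1 + 1))),
      φ (m - 1) p q = ∑ i : Fin (n - 1), ∑ j : Fin (n - 1),
        if i ≤ j then C (Q i j p) * X i * X j else 0)
    (c : ℕ → Fin (n - 1)) (hi : ∃ s, 1 ≤ s ∧ s ≤ n - 3 ∧ c s = c 0)
    (τ : Equiv.Perm (Fin (n - 3))) :
    braceFn φ P m Q (by omega) n
        (fun r => if h : 1 ≤ r ∧ r - 1 < n - 3 then c (1 + (τ ⟨r - 1, h.2⟩ : ℕ)) else c r)
      = (Equiv.Perm.sign τ : ℤ) • braceFn φ P m Q (by omega) n c := by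
  exact stmt12_general hn hm (by omega) (fun r hr => hcomp r (by omega)) hdegmid hPsymm hP Q
    hi τ
end

section
/- With the bracket and brace setup below (n ≥ 5), assume additionally the brace antisymmetry {i, j, a_1, …, a_{n−4}, k, ℓ} = −{k, ℓ, a_1, …, a_{n−4}, i, j} for all indices. Define σ = (1 2 ⋯ m) ∈ S_m, [[a_1,…,a_m]] := Σ_{k=1}^{m} [a_{σ^{2k}(1)}, …, a_{σ^{2k}(m)}], and Ω_j := (−1)^j·[[1, 2, …, ĵ, …, n−1]] for 1 ≤ j ≤ n−1. For distinct indices let ε_{ij} (resp. ε_{ijk}) denote the sign of the permutation taking 1, 2, …, n−1 to i, j, 1, …, îĵ, …, n−1 (resp. to i, j, k, 1, …, îĵk̂, …, n−1), where hats denote omission. Then for all pairwise distinct i, j, k ∈ {1,…,n−1}: (12) ∂²Ω_k/∂x_i∂x_j = (−1)^{n+1}·ε_{ijk}·2n·{i, i, 1, …, îĵk̂, …, n−1, j, j}; (13) ∂²Ω_j/∂x_i² = ε_{ij}·2n·{i, i, 1, …, îĵ, …, n−1, i}; (14) ∂²Ω_j/∂x_i∂x_j − ∂²Ω_k/∂x_i∂x_k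 = (−1)^n·ε_{ijk}·2n·{i, i, 1, …, îĵk̂, …, n−1, j, k}; (15) ∂²Ω_i/∂x_i² − ∂²Ω_j/∂x_i∂x_j − ∂²Ω_k/∂x_i∂x_k = (−1)^{n+1}·ε_{ijk}·2n·{i, j, 1, …, îĵk̂, …, n−1, k, i}. -/
open MvPolynomial

/-- The row vector `(∂φ_1/∂x_{a_1})(∂φ_2/∂x_{a_2})⋯(∂φ_r/∂x_{a_r})` (0-based indexing). -/
noncomputable def brkVec {K : Type*} [Field K] {N : ℕ} {b : ℕ → ℕ}
    (φ : ∀ r : ℕ, Matrix (Fin (b r)) (Fin (b (r + 1))) (MvPolynomial (Fin N) K))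
    (a : ℕ → Fin N) : ∀ r : ℕ, Fin (b r) → MvPolynomial (Fin N) K
  | 0 => fun _ => 1
  | (r + 1) => Matrix.vecMul (brkVec φ a r) (fun p q => pderiv (a r) (φ r p q))

/-- The bracket `[a_1, …, a_m]`, a `1 × 1` matrix (since `b m = 1`) identified with a
polynomial via the sum of its entries. -/
noncomputable def brk {K : Type*} [Field K] {N : ℕ} {b : ℕ → ℕ}
    (φ : ∀ r : ℕ, Matrix (Fin (b r)) (Fin (b (r + 1))) (MvPolynomial (Fin N) K))
    (m : ℕ) (a : ℕ → Fin N) : MvPolynomial (Fin N) K :=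
  ∑ j : Fin (b m), brkVec φ a m j

/-- The double bracket `[[a_1, …, a_m]] = Σ_{k=1}^{m} [a_{σ^{2k}(1)}, …, a_{σ^{2k}(m)}]`,
where `σ = (1 2 ⋯ m)`. -/
noncomputable def dbrk {K : Type*} [Field K] {N : ℕ} {b : ℕ → ℕ}
    (φ : ∀ r : ℕ, Matrix (Fin (b r)) (Fin (b (r + 1))) (MvPolynomial (Fin N) K))
    (m : ℕ) (a : ℕ → Fin N) : MvPolynomial (Fin N) K :=
  ∑ k ∈ Finset.range m, brk φ m (fun r => a ((r + 2 * (k + 1)) % m))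

/-- The 0-based sequence `1, 2, …, ĵ, …, n−1` (omission of `j`). -/
def omitIdx {N : ℕ} (j : Fin N) : ℕ → Fin N := fun r =>
  if h : r < (j : ℕ) then ⟨r, lt_trans h j.isLt⟩
  else if h2 : r + 1 < N then ⟨r + 1, h2⟩ else j

/-- The quadratic form `Ω_j = (−1)^j·[[1, 2, …, ĵ, …, n−1]]` (0-based `j`, whence the
exponent `j + 1`). -/
noncomputable def OmegaForm {K : Type*} [Field K] {N : ℕ} {b : ℕ → ℕ}
    (φ : ∀ r : ℕ, Matrix (Fin (b r)) (Fin (b (r + 1))) (MvPolynomial (Fin N) K))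
    (m : ℕ) (j : Fin N) : MvPolynomial (Fin N) K :=
  (-1 : MvPolynomial (Fin N) K) ^ ((j : ℕ) + 1) * dbrk φ m (omitIdx j)

/-!
Attach to a word of vectors the brace whose outer slots are arbitrary, so that the outer
differentials become quadratic maps `left` and `right`. Differentiating `φ_r φ_{r+1} = 0` shows that
this brace is alternating in its letters and that a letter can be traded between the word and an
outer slot. Hence all rotations of a word `j, i, W` contribute to `∂²[[j, i, W]]/∂x_i∂x_j` a small
multiple of the single brace `{i, i, W, j, j}`, and summing over the rotations by even amounts gives
the factor `2n`. This is (12); since the double bracket is itself alternating in its letters, the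
other identities follow by polarizing (12) in `j` and then in `i`.
-/

section Words

variable {V R : Type*} [CommRing R]

/-- A function of words which changes sign when two adjacent letters are exchanged. -/
def SwapAntisymm (F : List V → R) : Prop :=
  ∀ s x y t, F (s ++ x :: y :: t) = -F (s ++ y :: x :: t)

namespace SwapAntisymm

variable {F : List V → R} (hF : SwapAntisymm F)

include hF

theorem apply_append_cons (s : List V) (x : V) (t : List V) :
    F (s ++ x :: t) = (-1) ^ s.length * F (x :: (s ++ t)) := by
  induction s using List.reverseRecOn generalizing t with
  | nil => simp
  | append_singleton s y ih =>
    calc F (s ++ [y] ++ x :: t) = F (s ++ y :: x :: t) := by simp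
      _ = -F (s ++ x :: y :: t) := hF s y x t
      _ = _ := by rw [ih]; simp [pow_succ]

theorem apply_cons_append (x : V) (s t : List V) :
    F (x :: (s ++ t)) = (-1) ^ s.length * F (s ++ x :: t) := by
  rw [hF.apply_append_cons, ← mul_assoc, ← mul_pow]
  simp

theorem apply_rotate {w : List V} (hw : w ≠ []) (k : ℕ) :
    F (w.rotate k) = ((-1) ^ (w.length + 1)) ^ k * F w := by
  induction k with
  | zero => simp
  | succ k ih =>
    obtain ⟨x, t, hxt⟩ := List.exists_cons_of_ne_nil (l := w.rotate k) (by simpa using hw)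
    have hlen : w.length = t.length + 1 := by
      rw [← List.length_rotate (l := w) (n := k), hxt, List.length_cons]
    have hrot : F (t ++ [x]) = (-1) ^ t.length * F (x :: t) := by
      simpa using hF.apply_append_cons t x []
    rw [← List.rotate_rotate, hxt, List.rotate_cons_succ, List.rotate_zero, hrot, ← hxt, ih, hlen]
    ring

theorem apply_ofFn_comp_swap {k : ℕ} (a : Fin (k + 1) → V) (i : Fin k) :
    F (List.ofFn (a ∘ Equiv.swap i.castSucc i.succ)) = -F (List.ofFn a) := by
  have split (c : Fin (k + 1) → V) : List.ofFn c = (List.ofFn c).take i ++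
      c i.castSucc :: c i.succ :: (List.ofFn c).drop (i + 2) := by
    conv_lhs => rw [← List.take_append_drop i (List.ofFn c)]
    rw [List.drop_eq_getElem_cons (by simp), List.drop_eq_getElem_cons (by simp)]
    simp only [List.getElem_ofFn]
    rfl
  have fixed (r : ℕ) (hr : r < k + 1) (h₁ : r ≠ i) (h₂ : r ≠ i + 1) :
      Equiv.swap i.castSucc i.succ ⟨r, hr⟩ = ⟨r, hr⟩ :=
    Equiv.swap_apply_of_ne_of_ne (by simpa [Fin.ext_iff]) (by simpa [Fin.ext_iff])
  have htake : (List.ofFn (a ∘ Equiv.swap i.castSucc i.succ)).take i = (List.ofFn a).take i := by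
    refine List.ext_getElem (by simp) fun r hr _ => ?_
    simp only [List.length_take, List.length_ofFn, lt_inf_iff] at hr
    simp only [List.getElem_take, List.getElem_ofFn, Function.comp_apply,
      fixed r hr.2 (by omega) (by omega)]
  have hdrop : (List.ofFn (a ∘ Equiv.swap i.castSucc i.succ)).drop (i + 2) =
      (List.ofFn a).drop (i + 2) := by
    refine List.ext_getElem (by simp) fun r hr _ => ?_
    simp only [List.length_drop, List.length_ofFn] at hr
    simp only [List.getElem_drop, List.getElem_ofFn, Function.comp_apply,
      fixed (i + 2 + r) (by omega) (by omega) (by omega)]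
  have hswap := hF ((List.ofFn a).take i) (a i.succ) (a i.castSucc) ((List.ofFn a).drop (i + 2))
  rw [← split a] at hswap
  rw [split (a ∘ _), htake, hdrop, ← hswap]
  simp only [Function.comp_apply, Equiv.swap_apply_left, Equiv.swap_apply_right]

theorem apply_ofFn_comp_perm {k : ℕ} (τ : Equiv.Perm (Fin (k + 1))) (a : Fin (k + 1) → V) :
    F (List.ofFn (a ∘ τ)) = (Equiv.Perm.sign τ : ℤ) * F (List.ofFn a) := by
  have hτ : τ ∈ Submonoid.closure
      (Set.range fun i : Fin k => Equiv.swap i.castSucc i.succ) := by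
    rw [Equiv.Perm.mclosure_swap_castSucc_succ]
    trivial
  induction hτ using Submonoid.closure_induction generalizing a with
  | mem τ hτ =>
    obtain ⟨i, rfl⟩ := hτ
    rw [hF.apply_ofFn_comp_swap, Equiv.Perm.sign_swap Fin.castSucc_lt_succ.ne]
    simp only [Units.val_neg, Units.val_one, Int.cast_neg, Int.cast_one, neg_mul, one_mul]
  | one => simp
  | mul τ₁ τ₂ _ _ h₁ h₂ =>
    rw [Equiv.Perm.coe_mul, ← Function.comp_assoc, h₂, h₁, Equiv.Perm.sign_mul]
    push_cast
    ring

end SwapAntisymm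

theorem swapAntisymm_of_alternating [AddCommGroup V] {F : List V → R}
    (hadd : ∀ s x y t, s ++ t ≠ [] → F (s ++ (x + y) :: t) = F (s ++ x :: t) + F (s ++ y :: t))
    (halt : ∀ s x t, F (s ++ x :: x :: t) = 0) : SwapAntisymm F := by
  intro s x y t
  have hleft (z : V) : F (s ++ (x + y) :: z :: t) = F (s ++ x :: z :: t) + F (s ++ y :: z :: t) :=
    hadd s x y (z :: t) (by simp)
  have hright (z : V) :
      F (s ++ z :: (x + y) :: t) = F (s ++ z :: x :: t) + F (s ++ z :: y :: t) := by
    simpa using hadd (s ++ [z]) x y t (by simp)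
  have h := halt s (x + y) t
  rw [hleft, hright, hright, halt, halt] at h
  linear_combination h

theorem rotate_cons_cons {x y : V} {W : List V} {k : ℕ} (hk : k ≤ W.length) :
    (x :: y :: W).rotate (k + 2) = W.drop k ++ x :: y :: W.take k := by
  rw [List.rotate_eq_drop_append_take (by simpa using hk)]
  simp

theorem sum_range_two_mul_of_periodic {g : ℕ → R} {m : ℕ} (hg : Function.Periodic g m) (a : ℕ) :
    ∑ k ∈ Finset.range m, (g (2 * k + a) + g (2 * k + a + 1)) =
      2 * ∑ r ∈ Finset.range m, g r := by
  have hshift : ∑ r ∈ Finset.range m, g (r + a) = ∑ r ∈ Finset.range m, g r := by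
    induction a with
    | zero => rfl
    | succ a ih =>
      have h := (Finset.sum_range_succ (fun r => g (r + a)) m).symm.trans
        (Finset.sum_range_succ' (fun r => g (r + a)) m)
      rw [zero_add, add_comm m a, hg a] at h
      rw [← ih, add_right_cancel h]
      simp only [add_right_comm, add_assoc]
  have hpairs (t : ℕ) : ∑ k ∈ Finset.range t, (g (2 * k + a) + g (2 * k + a + 1)) =
      ∑ r ∈ Finset.range (2 * t), g (r + a) := by
    induction t with
    | zero => simp
    | succ t ih =>
      rw [Finset.sum_range_succ, ih, mul_add, mul_one, Finset.sum_range_succ,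
        Finset.sum_range_succ, ← add_assoc, add_right_comm (2 * t) a 1]
  rw [hpairs, two_mul, two_mul, Finset.sum_range_add, hshift]
  congr 1
  rw [← hshift]
  refine Finset.sum_congr rfl fun r _ => ?_
  rw [add_assoc, add_comm m, hg]

/-- A periodic function of this shape is a constant plus a sum of neighbouring values of a periodic
function, so that its sum over a period in steps of two does not depend on the parity of `m`. -/
theorem exists_periodic_add_succ {f : ℕ → R} {m : ℕ} {c : R} (hm : 3 ≤ m)
    (hf : Function.Periodic f m) (hconst : ∀ r, 3 ≤ r → r < m → f r = c)
    (hbal : f 0 + f 2 = f 1 + c) :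
    ∃ g : ℕ → R, Function.Periodic g m ∧
      (∀ r, f (r + m) = c + (g (r + (m - 1)) + g (r + (m - 1) + 1))) ∧
      ∑ r ∈ Finset.range m, g r = f 1 - c := by
  let g₀ : ℕ → R := fun r => if r = 0 then f 0 - c else if r = 1 then f 2 - c else 0
  let g : ℕ → R := fun r => g₀ (r % m)
  have hg : Function.Periodic g m := fun r => by simp [g]
  refine ⟨g, hg, fun r => ?_, ?_⟩
  · rw [show r + (m - 1) + 1 = r + m by omega, hf, hg, ← hf.map_mod_nat]
    have hr := Nat.mod_lt r (show 0 < m by omega)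
    have hpred : (r + (m - 1)) % m = (r % m + (m - 1)) % m := by rw [Nat.mod_add_mod]
    simp only [g, hpred]
    generalize r % m = s at hr
    obtain rfl | hs : s = 0 ∨ 1 ≤ s := by omega
    · rw [zero_add, Nat.mod_eq_of_lt (by omega)]
      simp [g₀, show m - 1 ≠ 0 by omega, show m - 1 ≠ 1 by omega]
    · rw [show s + (m - 1) = s - 1 + m by omega, Nat.add_mod_right, Nat.mod_eq_of_lt (by omega)]
      obtain rfl | rfl | hs' : s = 1 ∨ s = 2 ∨ 3 ≤ s := by omega
      · simp only [g₀, tsub_self, one_ne_zero, if_true, if_false]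
        linear_combination -hbal
      · simp [g₀]
      · simp [g₀, hconst s hs' hr, show s - 1 ≠ 0 by omega, show s - 1 ≠ 1 by omega,
          show s ≠ 0 by omega, show s ≠ 1 by omega]
  · obtain ⟨t, rfl⟩ : ∃ t, m = t + 2 := ⟨m - 2, by omega⟩
    have hg₀ : ∑ r ∈ Finset.range (t + 2), g r = ∑ r ∈ Finset.range (t + 2), g₀ r :=
      Finset.sum_congr rfl fun r hr => by simp [g, Nat.mod_eq_of_lt (Finset.mem_range.1 hr)]
    rw [hg₀, Finset.sum_range_succ', Finset.sum_range_succ']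
    have htail : ∑ r ∈ Finset.range t, g₀ (r + 1 + 1) = 0 :=
      Finset.sum_eq_zero fun r _ => by simp [g₀]
    rw [htail]
    simp only [g₀, zero_add, one_ne_zero, if_true, if_false]
    linear_combination hbal

theorem sum_range_two_mul_add_of_periodic {f : ℕ → R} {m : ℕ} {c : R} (hm : 3 ≤ m)
    (hf : Function.Periodic f m) (hconst : ∀ r, 3 ≤ r → r < m → f r = c)
    (hbal : f 0 + f 2 = f 1 + c) (a : ℕ) :
    ∑ k ∈ Finset.range m, f (2 * k + a) = m * c + 2 * (f 1 - c) := by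
  obtain ⟨g, hg, hfg, hsum⟩ := exists_periodic_add_succ hm hf hconst hbal
  calc ∑ k ∈ Finset.range m, f (2 * k + a)
      = ∑ k ∈ Finset.range m, (c + (g (2 * k + (a + (m - 1))) + g (2 * k + (a + (m - 1)) + 1))) :=
        Finset.sum_congr rfl fun k _ => by rw [← hf, hfg, add_assoc (2 * k)]
    _ = m * c + 2 * (f 1 - c) := by
        rw [Finset.sum_add_distrib, sum_range_two_mul_of_periodic hg, hsum]
        simp

end Words

/-- The formal properties of the pairing `{x, x, w, y, y}` of a word `w` of vectors with the two
quadratic maps at the ends of the complex. A brace with distinct outer indices is obtained from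
the polar forms of `left` and `right`, which makes sense in every characteristic. -/
structure BraceSystem (K V A B : Type*) [CommRing K] [AddCommGroup V] [Module K V]
    [AddCommGroup A] [Module K A] [AddCommGroup B] [Module K B] where
  /-- The pairing of a word with a row vector and a column vector. -/
  brace : List V → A →ₗ[K] B →ₗ[K] K
  /-- The quadratic map given by the first differential. -/
  left : QuadraticMap K V A
  /-- The quadratic map given by the last differential. -/
  right : QuadraticMap K V B
  brace_add : ∀ s x y t, brace (s ++ (x + y) :: t) = brace (s ++ x :: t) + brace (s ++ y :: t)
  brace_self : ∀ s x t, brace (s ++ x :: x :: t) = 0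
  brace_cons_polar : ∀ x y w,
    brace (x :: w) (QuadraticMap.polar left x y) = -brace (y :: w) (left x)
  brace_concat_polar : ∀ x y w α,
    brace (w ++ [x]) α (QuadraticMap.polar right x y) = -brace (w ++ [y]) α (right x)
  brace_antisymm : ∀ w x y, brace w (left x) (right y) = -brace w (left y) (right x)

namespace BraceSystem

open QuadraticMap

variable {K V A B : Type*} [CommRing K] [AddCommGroup V] [Module K V]
  [AddCommGroup A] [Module K A] [AddCommGroup B] [Module K B] (S : BraceSystem K V A B)

theorem swapAntisymm_brace (α : A) (β : B) : SwapAntisymm fun w => S.brace w α β :=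
  swapAntisymm_of_alternating (fun s x y t _ => by simp [S.brace_add])
    fun s x t => by simp [S.brace_self]

theorem brace_cons_polar_cyclic (w : List V) (β : B) (x y z : V) :
    S.brace (x :: w) (polar S.left y z) β + S.brace (y :: w) (polar S.left x z) β +
      S.brace (z :: w) (polar S.left x y) β = 0 := by
  have h := LinearMap.congr_fun (S.brace_cons_polar (x + y) z w) β
  have hadd (α : A) :
      S.brace ((x + y) :: w) α β = S.brace (x :: w) α β + S.brace (y :: w) α β := by
    simpa using LinearMap.congr_fun₂ (S.brace_add [] x y w) α β
  rw [hadd, polar_add_left, map_add, map_add, S.brace_cons_polar, S.brace_cons_polar] at h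
  simp only [polar, map_sub, LinearMap.add_apply, LinearMap.sub_apply, LinearMap.neg_apply] at h ⊢
  linear_combination h

theorem brace_concat_polar_cyclic (w : List V) (α : A) (x y z : V) :
    S.brace (w ++ [x]) α (polar S.right y z) + S.brace (w ++ [y]) α (polar S.right x z) +
      S.brace (w ++ [z]) α (polar S.right x y) = 0 := by
  have h := S.brace_concat_polar (x + y) z w α
  have hadd (β : B) :
      S.brace (w ++ [x + y]) α β = S.brace (w ++ [x]) α β + S.brace (w ++ [y]) α β := by
    simp [S.brace_add]
  rw [hadd, polar_add_left, map_add, map_add, S.brace_concat_polar, S.brace_concat_polar] at h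
  simp only [polar, map_sub] at h ⊢
  linear_combination h

theorem brace_left_polar (w : List V) (x y z : V) :
    S.brace w (S.left x) (polar S.right y z) = -S.brace w (polar S.left y z) (S.right x) := by
  simp only [polar, map_sub, LinearMap.sub_apply]
  linear_combination S.brace_antisymm w x (y + z) - S.brace_antisymm w x y -
    S.brace_antisymm w x z

theorem brace_polar_polar (w : List V) (x y z t : V) :
    S.brace w (polar S.left x y) (polar S.right z t) =
      -S.brace w (polar S.left z t) (polar S.right x y) := by
  have h (a : V) := S.brace_left_polar w a z t
  rw [polar, map_sub, map_sub, LinearMap.sub_apply, LinearMap.sub_apply, h, h, h]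
  simp only [polar, map_sub, LinearMap.sub_apply]
  ring

theorem brace_append_cons_polar (s : List V) (x : V) (t : List V) (c : V) (β : B) :
    S.brace (s ++ x :: t) (polar S.left c x) β =
      -((-1) ^ s.length * S.brace (c :: (s ++ t)) (S.left x) β) := by
  rw [(S.swapAntisymm_brace _ β).apply_append_cons, polar_comm, S.brace_cons_polar]
  simp

theorem brace_append_cons_polar_right (s : List V) (x : V) (t : List V) (α : A) (z : V) :
    S.brace (s ++ x :: t) α (polar S.right z x) =
      -((-1) ^ t.length * S.brace (s ++ t ++ [z]) α (S.right x)) := by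
  have hlast : S.brace (s ++ x :: t) α (polar S.right z x) =
      (-1) ^ t.length * S.brace (s ++ t ++ [x]) α (polar S.right z x) := by
    have hs := (S.swapAntisymm_brace α (polar S.right z x)).apply_append_cons
    have ht := hs (s ++ t) x []
    simp only [hs s x t, ht, List.length_append, List.append_nil, pow_add]
    ring_nf
    simp
  rw [hlast, polar_comm, S.brace_concat_polar, mul_neg]

/-- The second derivative along `u` and `v` of the bracket of a word. It is meaningful for words
with at least two letters. -/
def bracketHess (l : List V) (u v : V) : K :=
  S.brace l.tail.dropLast (polar S.left (l.headD 0) u) (polar S.right (l.getLastD 0) v) +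
    S.brace l.tail.dropLast (polar S.left (l.headD 0) v) (polar S.right (l.getLastD 0) u)

theorem bracketHess_cons_concat (x : V) (w : List V) (z u v : V) :
    S.bracketHess (x :: (w ++ [z])) u v =
      S.brace w (polar S.left x u) (polar S.right z v) +
        S.brace w (polar S.left x v) (polar S.right z u) := by
  simp [bracketHess, List.getLast?_cons]

theorem bracketHess_add_left (l : List V) (u u' v : V) :
    S.bracketHess l (u + u') v = S.bracketHess l u v + S.bracketHess l u' v := by
  simp only [bracketHess, polar_add_right, map_add, LinearMap.add_apply]
  ring

theorem bracketHess_comm (l : List V) (u v : V) : S.bracketHess l u v = S.bracketHess l v u :=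
  add_comm _ _

theorem bracketHess_append_add (s : List V) (x y : V) (t : List V) (h : s ++ t ≠ []) (u v : V) :
    S.bracketHess (s ++ (x + y) :: t) u v =
      S.bracketHess (s ++ x :: t) u v + S.bracketHess (s ++ y :: t) u v := by
  rcases s with _ | ⟨c, s⟩
  · obtain ⟨w, z, rfl⟩ := List.eq_nil_or_concat' t |>.resolve_left (by simpa using h)
    simp only [List.nil_append, bracketHess_cons_concat, polar_add_left, map_add,
      LinearMap.add_apply]
    ring
  · obtain rfl | ⟨w, z, rfl⟩ := List.eq_nil_or_concat' t
    · simp only [List.cons_append, bracketHess_cons_concat, polar_add_left, map_add]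
      ring
    · have hassoc (x : V) : c :: s ++ x :: (w ++ [z]) = c :: ((s ++ x :: w) ++ [z]) := by simp
      simp only [hassoc, bracketHess_cons_concat, S.brace_add, LinearMap.add_apply]
      ring

theorem bracketHess_rotate_append_add (s : List V) (x y : V) (t : List V) (h : s ++ t ≠ [])
    (r : ℕ) (u v : V) :
    S.bracketHess ((s ++ (x + y) :: t).rotate r) u v =
      S.bracketHess ((s ++ x :: t).rotate r) u v + S.bracketHess ((s ++ y :: t).rotate r) u v := by
  induction r generalizing s t with
  | zero => simpa using S.bracketHess_append_add s x y t h u v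
  | succ r ih =>
    rcases s with _ | ⟨c, s⟩
    · simpa [List.rotate_cons_succ] using ih t [] (by simpa using h)
    · simpa [List.rotate_cons_succ] using ih s (t ++ [c]) (by simp)

/-- The second derivative along `u` and `v` of the double bracket of a word. -/
def doubleBracketHess (l : List V) (u v : V) : K :=
  ∑ k ∈ Finset.range l.length, S.bracketHess (l.rotate (2 * (k + 1))) u v

theorem doubleBracketHess_add_left (l : List V) (u u' v : V) :
    S.doubleBracketHess l (u + u') v = S.doubleBracketHess l u v + S.doubleBracketHess l u' v := by
  simp only [doubleBracketHess, bracketHess_add_left, Finset.sum_add_distrib]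

theorem doubleBracketHess_comm (l : List V) (u v : V) :
    S.doubleBracketHess l u v = S.doubleBracketHess l v u := by
  simp only [doubleBracketHess, S.bracketHess_comm _ u v]

theorem doubleBracketHess_append_add (s : List V) (x y : V) (t : List V) (h : s ++ t ≠ [])
    (u v : V) :
    S.doubleBracketHess (s ++ (x + y) :: t) u v =
      S.doubleBracketHess (s ++ x :: t) u v + S.doubleBracketHess (s ++ y :: t) u v := by
  simp only [doubleBracketHess, S.bracketHess_rotate_append_add s x y t h, Finset.sum_add_distrib,
    List.length_append, List.length_cons]

theorem bracketHess_self_cons (x : V) {t : List V} (ht : t ≠ []) (u v : V) :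
    S.bracketHess (x :: x :: t) u v =
      (-1) ^ (t.length + 1) * S.brace t (S.left x) (polar S.right u v) := by
  obtain ⟨w, z, rfl⟩ := (List.eq_nil_or_concat' t).resolve_left ht
  have hmove (a b : V) : S.brace (x :: w) (polar S.left x a) (polar S.right z b) =
      -((-1) ^ w.length * S.brace (w ++ [a]) (S.left x) (polar S.right z b)) := by
    rw [S.brace_cons_polar, LinearMap.neg_apply]
    simpa using (S.swapAntisymm_brace (S.left x) (polar S.right z b)).apply_cons_append a w []
  have hcyc := S.brace_concat_polar_cyclic w (S.left x) u v z
  rw [← List.cons_append, bracketHess_cons_concat, hmove, hmove, List.length_append,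
    polar_comm _ z, polar_comm _ z]
  simp only [List.length_singleton, pow_succ]
  linear_combination -(-1) ^ w.length * hcyc

theorem bracketHess_concat_self (x : V) {t : List V} (ht : t ≠ []) (u v : V) :
    S.bracketHess (t ++ [x, x]) u v =
      (-1) ^ (t.length + 1) * S.brace t (polar S.left u v) (S.right x) := by
  obtain ⟨c, w, rfl⟩ := List.exists_cons_of_ne_nil ht
  have hmove (a b : V) : S.brace (w ++ [x]) (polar S.left c b) (polar S.right x a) =
      -((-1) ^ w.length * S.brace (a :: w) (polar S.left c b) (S.right x)) := by
    rw [S.brace_concat_polar]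
    simpa using (S.swapAntisymm_brace (polar S.left c b) (S.right x)).apply_append_cons w a []
  have hcyc := S.brace_cons_polar_cyclic w (S.right x) u v c
  rw [show c :: w ++ [x, x] = c :: ((w ++ [x]) ++ [x]) by simp, bracketHess_cons_concat, hmove,
    hmove, polar_comm _ c, polar_comm _ c]
  simp only [List.length_cons, pow_succ]
  linear_combination -(-1) ^ w.length * hcyc

theorem bracketHess_append_self_append (x : V) {s t : List V} (hs : s ≠ []) (ht : t ≠ [])
    (u v : V) : S.bracketHess (s ++ x :: x :: t) u v = 0 := by
  obtain ⟨c, s, rfl⟩ := List.exists_cons_of_ne_nil hs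
  obtain ⟨t, z, rfl⟩ := (List.eq_nil_or_concat' t).resolve_left ht
  rw [show c :: s ++ x :: x :: (t ++ [z]) = c :: ((s ++ x :: x :: t) ++ [z]) by simp,
    bracketHess_cons_concat, S.brace_self]
  simp

theorem bracketHess_cons_concat_self (x : V) (t : List V) (u v : V) :
    S.bracketHess (x :: (t ++ [x])) u v = 0 := by
  rw [bracketHess_cons_concat, S.brace_polar_polar, neg_add_cancel]

theorem periodic_bracketHess_rotate (l : List V) (u v : V) :
    Function.Periodic (fun r => S.bracketHess (l.rotate r) u v) l.length := fun r => by
  beta_reduce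
  rw [← List.rotate_mod, Nat.add_mod_right, List.rotate_mod]

theorem doubleBracketHess_append_self (s : List V) (x : V) (t : List V) (u v : V) :
    S.doubleBracketHess (s ++ x :: x :: t) u v = 0 := by
  obtain ⟨w, hw⟩ : ∃ w, w = t ++ s := ⟨_, rfl⟩
  have hrot : s ++ x :: x :: t = (x :: x :: w).rotate (t.length + 2) := by
    rw [rotate_cons_cons (by simp [hw])]
    simp [hw]
  rw [hrot, doubleBracketHess, List.length_rotate]
  simp only [List.rotate_rotate, show ∀ k, t.length + 2 + 2 * (k + 1) = 2 * k + (t.length + 4) by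
    intro k; ring]
  obtain rfl | hw : w = [] ∨ w ≠ [] := eq_or_ne w []
  · refine Finset.sum_eq_zero fun k _ => ?_
    rw [show [x, x] = List.replicate 2 x from rfl, List.rotate_replicate]
    exact S.bracketHess_cons_concat_self x [] u v
  have hsum := sum_range_two_mul_add_of_periodic (m := (x :: x :: w).length) (c := 0)
    (by simpa [Nat.one_le_iff_ne_zero] using hw) (S.periodic_bracketHess_rotate (x :: x :: w) u v)
    (fun r hr hrm => ?_) ?_ (t.length + 4)
  · simpa [List.rotate_cons_succ, S.bracketHess_cons_concat_self] using hsum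
  · obtain ⟨k, rfl⟩ : ∃ k, r = k + 2 := ⟨r - 2, by omega⟩
    simp only [List.length_cons] at hrm
    rw [rotate_cons_cons (by omega)]
    exact S.bracketHess_append_self_append x (by simp; omega) (by simp [hw]; omega) u v
  · have h₁ := S.bracketHess_cons_concat_self x w u v
    have h₂ := S.bracketHess_concat_self x hw u v
    simp [List.rotate_cons_succ, h₁, h₂, S.bracketHess_self_cons x hw, S.brace_left_polar]

theorem swapAntisymm_doubleBracketHess (u v : V) :
    SwapAntisymm fun l => S.doubleBracketHess l u v :=
  swapAntisymm_of_alternating (fun s x y t h => S.doubleBracketHess_append_add s x y t h u v)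
    fun s x t => S.doubleBracketHess_append_self s x t u v

theorem brace_polar_polar_self {w : List V} (hw : w ≠ []) (x y : V) :
    S.brace w (polar S.left x y) (polar S.right x y) = 0 := by
  obtain ⟨c, w, rfl⟩ := List.exists_cons_of_ne_nil hw
  have hcontract (a b : V) : S.brace (a :: w) (polar S.left b c) (polar S.right a b) =
      S.brace (c :: w) (S.left b) (S.right a) := by
    have h₁ := S.brace_append_cons_polar_right [] a w (polar S.left b c) b
    have h₂ := S.brace_append_cons_polar w b [] c (S.right a)
    simp only [List.nil_append, List.append_nil] at h₁ h₂
    rw [polar_comm S.right, h₁, polar_comm S.left, h₂]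
    rw [mul_neg, neg_neg, ← mul_assoc, ← mul_pow]
    simp
  have hcyc := S.brace_cons_polar_cyclic w (polar S.right x y) x y c
  rw [hcontract, polar_comm S.right, hcontract, S.brace_antisymm] at hcyc
  rw [polar_comm S.right]
  linear_combination hcyc

section Evaluation

variable {W : List V} (i j : V)

theorem bracketHess_cons_cons (hW : W ≠ []) : S.bracketHess (j :: i :: W) i j =
    3 * ((-1) ^ (W.length + 1) * S.brace W (S.left i) (S.right j)) := by
  obtain ⟨w, z, rfl⟩ := (List.eq_nil_or_concat' W).resolve_left hW
  have h₁ := S.brace_append_cons_polar [] i w j (polar S.right z j)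
  have h₂ (a b : V) := S.brace_append_cons_polar_right [] a w (S.left b) z
  simp only [List.nil_append] at h₁ h₂
  rw [← List.cons_append, bracketHess_cons_concat, h₁, h₂, polar_self, map_nsmul,
    LinearMap.smul_apply, h₂, S.brace_antisymm _ j i]
  simp only [List.length_append, List.length_nil, List.length_singleton, nsmul_eq_mul]
  push_cast
  ring

theorem bracketHess_append_pair (hW : W ≠ []) : S.bracketHess (W ++ [j, i]) i j =
    3 * ((-1) ^ (W.length + 1) * S.brace W (S.left i) (S.right j)) := by
  obtain ⟨c, w, rfl⟩ := List.exists_cons_of_ne_nil hW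
  have h₁ (a b : V) := S.brace_append_cons_polar w a [] c (S.right b)
  have h₂ := S.brace_append_cons_polar_right w j [] (polar S.left c i) i
  simp only [List.append_nil] at h₁ h₂
  rw [show c :: w ++ [j, i] = c :: ((w ++ [j]) ++ [i]) by simp, bracketHess_cons_concat, h₂, h₁,
    polar_self, map_nsmul, h₁, S.brace_antisymm _ j i]
  simp only [List.length_cons, List.length_nil, nsmul_eq_mul]
  push_cast
  ring

theorem bracketHess_append_pair_append {s t : List V} (hs : s ≠ []) (ht : t ≠ []) :
    S.bracketHess (s ++ j :: i :: t) i j =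
      2 * ((-1) ^ ((s ++ t).length + 1) * S.brace (s ++ t) (S.left i) (S.right j)) := by
  obtain ⟨c, s, rfl⟩ := List.exists_cons_of_ne_nil hs
  obtain ⟨t, z, rfl⟩ := (List.eq_nil_or_concat' t).resolve_left ht
  have h₁ := S.brace_append_cons_polar (s ++ [j]) i t c (polar S.right z j)
  have h₂ := S.brace_append_cons_polar_right (c :: s) j t (S.left i) z
  have h₃ := S.brace_append_cons_polar s j (i :: t) c (polar S.right z i)
  have h₄ := S.brace_append_cons_polar_right (c :: s) i t (S.left j) z
  simp only [List.append_assoc, List.cons_append, List.nil_append] at h₁ h₂ h₃ h₄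
  rw [show c :: s ++ j :: i :: (t ++ [z]) = c :: ((s ++ j :: i :: t) ++ [z]) by simp,
    bracketHess_cons_concat, h₁, h₂, h₃, h₄, S.brace_antisymm _ j i]
  simp only [List.length_append, List.length_cons, List.length_nil, List.cons_append]
  ring

theorem bracketHess_cons_concat_pair (hW : W ≠ []) : S.bracketHess (i :: (W ++ [j])) i j =
    4 * S.brace W (S.left i) (S.right j) := by
  rw [bracketHess_cons_concat, polar_comm S.right j i, S.brace_polar_polar_self hW, polar_self,
    polar_self]
  simp only [map_nsmul, LinearMap.smul_apply, nsmul_eq_mul]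
  push_cast
  ring

theorem bracketHess_rotate_cons_cons {k : ℕ} (hk₀ : k ≠ 0) (hk : k < W.length) :
    S.bracketHess ((j :: i :: W).rotate (k + 2)) i j =
      2 * ((-1) ^ (W.length + 1) *
        (((-1) ^ (W.length + 1)) ^ k * S.brace W (S.left i) (S.right j))) := by
  have hW : W ≠ [] := List.ne_nil_of_length_pos (by omega)
  have hdrop : W.drop k ≠ [] := by simpa using hk
  have htake : W.take k ≠ [] := by simpa [hk₀] using hW
  rw [rotate_cons_cons hk.le, S.bracketHess_append_pair_append i j hdrop htake,
    ← List.rotate_eq_drop_append_take hk.le, List.length_rotate,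
    (S.swapAntisymm_brace (S.left i) (S.right j)).apply_rotate hW k]

/-- The identity from which all the others follow by polarization. -/
theorem doubleBracketHess_cons_cons (hW : W ≠ []) : S.doubleBracketHess (j :: i :: W) i j =
    2 * (W.length + 4) * ((-1) ^ (W.length + 1) * S.brace W (S.left i) (S.right j)) := by
  set ε : K := (-1) ^ (W.length + 1) with hε
  set U : K := S.brace W (S.left i) (S.right j) with hU
  have hεε : ε ^ 2 = 1 := by rw [hε, ← pow_mul, mul_comm, pow_mul]; simp
  have hεm : ε ^ (W.length + 2) = 1 := by
    rw [hε, ← pow_mul]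
    exact (Nat.even_mul_succ_self (W.length + 1)).neg_one_pow
  let f : ℕ → K := fun r => ε ^ r * S.bracketHess ((j :: i :: W).rotate r) i j
  have hf : Function.Periodic f (W.length + 2) := fun r => by
    simpa [f, pow_add, hεm] using
      congrArg (ε ^ r * ·) (S.periodic_bracketHess_rotate (j :: i :: W) i j r)
  have hf₀ : f 0 = 3 * (ε * U) := by simp [f, S.bracketHess_cons_cons i j hW, hε, hU]
  have hf₁ : f 1 = 4 * (ε * U) := by
    simp only [f, List.rotate_cons_succ, List.rotate_zero, List.cons_append,
      S.bracketHess_cons_concat_pair i j hW]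
    ring
  have hf₂ : f 2 = 3 * (ε * U) := by
    simp only [f, List.rotate_cons_succ, List.rotate_zero, List.append_assoc, List.cons_append,
      List.nil_append]
    rw [S.bracketHess_append_pair i j hW, hεε, one_mul]
  have hf₃ (r : ℕ) (hr : 3 ≤ r) (hrm : r < W.length + 2) : f r = 2 * (ε * U) := by
    obtain ⟨k, rfl⟩ : ∃ k, r = k + 2 := ⟨r - 2, by omega⟩
    simp only [f]
    rw [S.bracketHess_rotate_cons_cons i j (by omega) (by omega), ← hε, ← hU]
    have hk : ε ^ k * ε ^ k = 1 := by rw [← mul_pow, ← pow_two, hεε, one_pow]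
    linear_combination 2 * ε ^ 3 * U * hk + 2 * ε * U * hεε
  have hlen : 3 ≤ W.length + 2 := by have := List.length_pos_of_ne_nil hW; omega
  calc S.doubleBracketHess (j :: i :: W) i j
      = ∑ k ∈ Finset.range (W.length + 2), f (2 * k + 2) :=
        Finset.sum_congr rfl fun k _ => by simp [f, ← mul_add_one, pow_mul, hεε]
    _ = 2 * (W.length + 4) * (ε * U) := by
        rw [sum_range_two_mul_add_of_periodic hlen hf hf₃ (by rw [hf₀, hf₁, hf₂]; ring), hf₁]
        push_cast
        ring

theorem doubleBracketHess_cons_cons_add (hW : W ≠ []) (k : V) :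
    S.doubleBracketHess (k :: i :: W) i j + S.doubleBracketHess (j :: i :: W) i k =
      2 * (W.length + 4) *
        ((-1) ^ (W.length + 1) * S.brace W (S.left i) (polar S.right j k)) := by
  have hjk := S.doubleBracketHess_cons_cons i (j + k) hW
  have hletter (v : V) := S.doubleBracketHess_append_add [] j k (i :: W) (by simp) i v
  simp only [List.nil_append] at hletter
  rw [S.doubleBracketHess_comm, doubleBracketHess_add_left, S.doubleBracketHess_comm,
    S.doubleBracketHess_comm _ k, hletter, hletter] at hjk
  simp only [polar, map_sub]
  linear_combination hjk - S.doubleBracketHess_cons_cons i j hW -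
    S.doubleBracketHess_cons_cons i k hW

theorem doubleBracketHess_cons_cons_self (hW : W ≠ []) : S.doubleBracketHess (j :: i :: W) i i =
    2 * (W.length + 4) *
      ((-1) ^ (W.length + 1) * S.brace W (S.left i) (polar S.right j i)) := by
  have h := S.doubleBracketHess_cons_cons_add i j hW i
  have hself := S.doubleBracketHess_append_self [] i W i j
  rw [List.nil_append] at hself
  rwa [hself, zero_add] at h

theorem doubleBracketHess_polarized (hW : W ≠ []) (k l : V) :
    S.doubleBracketHess (k :: i :: W) l j + S.doubleBracketHess (k :: l :: W) i j +
      (S.doubleBracketHess (j :: i :: W) l k + S.doubleBracketHess (j :: l :: W) i k) =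
      2 * (W.length + 4) *
        ((-1) ^ (W.length + 1) * S.brace W (polar S.left i l) (polar S.right j k)) := by
  have hil := S.doubleBracketHess_cons_cons_add (i + l) j hW k
  have hletter (a u v : V) := S.doubleBracketHess_append_add [a] i l W (by simp) u v
  simp only [List.cons_append, List.nil_append] at hletter
  rw [doubleBracketHess_add_left, doubleBracketHess_add_left, hletter, hletter, hletter,
    hletter] at hil
  rw [polar, map_sub, map_sub, LinearMap.sub_apply, LinearMap.sub_apply]
  linear_combination hil - S.doubleBracketHess_cons_cons_add i j hW k -
    S.doubleBracketHess_cons_cons_add l j hW k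

theorem doubleBracketHess_three_term (hW : W ≠ []) (k : V) :
    S.doubleBracketHess (j :: k :: W) i i + S.doubleBracketHess (i :: k :: W) i j +
      S.doubleBracketHess (j :: i :: W) i k =
      -(2 * (W.length + 4) *
        ((-1) ^ (W.length + 1) * S.brace W (polar S.left i j) (polar S.right k i))) := by
  have h := S.doubleBracketHess_polarized i k hW i j
  have hself := S.doubleBracketHess_append_self [] i W j k
  have hswap (a b u v : V) := S.swapAntisymm_doubleBracketHess u v [] a b W
  simp only [List.nil_append] at hself hswap
  rw [hself] at h
  rw [hswap j k, hswap i k, hswap j i, S.doubleBracketHess_comm _ i j]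
  linear_combination -h

end Evaluation

end BraceSystem

section WordPairing

variable {K V B : Type*} {E : ℕ → Type*} [CommRing K] [AddCommGroup V] [Module K V]
  [AddCommGroup B] [Module K B] [∀ r, AddCommGroup (E r)] [∀ r, Module K (E r)]
  (A : ∀ r, V →ₗ[K] E r →ₗ[K] E (r + 1)) (γ : ∀ r, E r →ₗ[K] B →ₗ[K] K)

/-- Letters act on a graded space by the maps `A r` of degree one; a word starting in degree `r`
is applied from left to right and the result is paired with `B` through `γ`. -/
def wordPairing : List V → ∀ r, E r →ₗ[K] B →ₗ[K] K
  | [], r => γ r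
  | x :: w, r => wordPairing w (r + 1) ∘ₗ A r x

variable {A γ}

theorem isLinearMap_wordPairing_append_cons (s t : List V) (r : ℕ) :
    IsLinearMap K fun x => wordPairing A γ (s ++ x :: t) r := by
  induction s generalizing r with
  | nil => exact ((wordPairing A γ t (r + 1)).llcomp K _ _ _ ∘ₗ A r).isLinear
  | cons c s ih =>
    exact ⟨fun x y => by simp [wordPairing, (ih (r + 1)).map_add, LinearMap.add_comp],
      fun a x => by simp [wordPairing, (ih (r + 1)).map_smul, LinearMap.smul_comp]⟩

theorem wordPairing_append_self (hA : ∀ r x, A (r + 1) x ∘ₗ A r x = 0) (s : List V) (x : V)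
    (t : List V) (r : ℕ) : wordPairing A γ (s ++ x :: x :: t) r = 0 := by
  induction s generalizing r with
  | nil => simp [wordPairing, LinearMap.comp_assoc, hA]
  | cons c s ih => simp [wordPairing, ih]

theorem wordPairing_concat_congr {x x' : V} {β β' : B}
    (h : ∀ r α, γ (r + 1) (A r x α) β = γ (r + 1) (A r x' α) β') (w : List V) (r : ℕ) (α : E r) :
    wordPairing A γ (w ++ [x]) r α β = wordPairing A γ (w ++ [x']) r α β' := by
  induction w generalizing r with
  | nil => exact h r α
  | cons c _ ih => exact ih (r + 1) (A r c α)

theorem wordPairing_eq_zero {L : ℕ} (hγ : ∀ r, r ≠ L → γ r = 0) {w : List V} {r : ℕ}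
    (hr : r + w.length ≠ L) : wordPairing A γ w r = 0 := by
  induction w generalizing r with
  | nil => exact hγ r hr
  | cons c w ih =>
    rw [wordPairing, ih (by simpa [add_assoc, add_comm 1] using hr), LinearMap.zero_comp]

theorem wordPairing_ofFn {L : ℕ} {x : ℕ → V} {α : ∀ r, E r}
    (hα : ∀ r < L, α (r + 1) = A r (x r) (α r)) {l r : ℕ} (hl : r + l = L) :
    wordPairing A γ (List.ofFn fun t : Fin l => x (r + t)) r (α r) = γ L (α L) := by
  induction l generalizing r with
  | zero => obtain rfl : r = L := hl; simp [wordPairing]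
  | succ l ih =>
    have hr : r + 1 + l = L := by omega
    simp only [List.ofFn_succ, wordPairing, LinearMap.comp_apply, Fin.val_zero, add_zero,
      ← hα r (by omega), ← ih hr, Fin.val_succ, add_right_comm r, add_assoc r]

theorem eq_zero_of_forall_basis_word {ι : Type*} (b : Module.Basis ι K V) {F : List V → K}
    (hlin : ∀ s t, IsLinearMap K fun x => F (s ++ x :: t))
    (hF : ∀ l : List ι, F (l.map b) = 0) (w : List V) : F w = 0 := by
  suffices h : ∀ l : List ι, F (l.map b ++ w) = 0 from h []
  induction w with
  | nil => simpa using hF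
  | cons x w ih =>
    intro l
    have hzero : (hlin (l.map b) w).mk' = 0 := b.ext fun i => by simpa using ih (l ++ [i])
    exact LinearMap.congr_fun hzero x

end WordPairing

section CoefficientQuadraticMap

variable {K ι E B : Type*} [CommRing K] [Fintype ι] [LinearOrder ι]
  [AddCommGroup E] [Module K E] [AddCommGroup B] [Module K B]

/-- The quadratic map `x ↦ ∑ i ≤ j, xᵢ xⱼ P(i, j)`. -/
def coeffQuadraticMap (P : ι → ι → E) : QuadraticMap K (ι → K) E :=
  ∑ p : ι × ι with p.1 ≤ p.2, (LinearMap.toSpanSingleton K E (P p.1 p.2)).compQuadraticMap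
    (QuadraticMap.proj p.1 p.2)

theorem coeffQuadraticMap_apply (P : ι → ι → E) (x : ι → K) :
    coeffQuadraticMap P x = ∑ p : ι × ι with p.1 ≤ p.2, (x p.1 * x p.2) • P p.1 p.2 := by
  simp [coeffQuadraticMap]

theorem polar_coeffQuadraticMap (P : ι → ι → E) (x y : ι → K) :
    QuadraticMap.polar (coeffQuadraticMap P) x y =
      ∑ p : ι × ι with p.1 ≤ p.2, (x p.1 * y p.2 + y p.1 * x p.2) • P p.1 p.2 := by
  simp only [QuadraticMap.polar, coeffQuadraticMap_apply, ← Finset.sum_sub_distrib, ← sub_smul,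
    Pi.add_apply]
  exact Finset.sum_congr rfl fun p _ => congrArg (· • _) (by ring)

theorem coeffQuadraticMap_single (P : ι → ι → E) (i : ι) :
    coeffQuadraticMap P (Pi.single i (1 : K)) = P i i := by
  rw [coeffQuadraticMap_apply, Finset.sum_eq_single (i, i)]
  · simp
  · rintro ⟨a, b⟩ - hab
    rcases ne_or_eq a i with ha | rfl
    · simp [ha]
    · simp [show b ≠ a from fun h => hab (by rw [h])]
  · simp

theorem polar_coeffQuadraticMap_single {P : ι → ι → E} (hP : ∀ i j, P i j = P j i) {i j : ι}
    (hij : i ≠ j) :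
    QuadraticMap.polar (coeffQuadraticMap P) (Pi.single i (1 : K)) (Pi.single j 1) = P i j := by
  wlog h : i ≤ j generalizing i j
  · rw [QuadraticMap.polar_comm, this hij.symm (le_of_not_ge h), hP]
  rw [polar_coeffQuadraticMap, Finset.sum_eq_single (i, j)]
  · simp [hij]
  · rintro ⟨a, b⟩ hab hne
    have hji : ¬(b = i ∧ a = j) := by
      rintro ⟨rfl, rfl⟩
      exact hij (h.antisymm (by simpa using hab))
    have hij' : ¬(b = j ∧ a = i) := by
      rintro ⟨rfl, rfl⟩
      exact hne rfl
    simp only [Pi.single_apply, mul_ite, mul_one, mul_zero, ← ite_and]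
    rw [if_neg hij', if_neg hji, add_zero, zero_smul]
  · simp [h]

theorem coeffQuadraticMap_antisymm {P : ι → ι → E} {Q : ι → ι → B} {Γ : E →ₗ[K] B →ₗ[K] K}
    (hΓ : ∀ i j k l, Γ (P i j) (Q k l) = -Γ (P k l) (Q i j)) (x y : ι → K) :
    Γ (coeffQuadraticMap P x) (coeffQuadraticMap Q y) =
      -Γ (coeffQuadraticMap P y) (coeffQuadraticMap Q x) := by
  simp only [coeffQuadraticMap_apply, map_sum, map_smul, LinearMap.sum_apply,
    LinearMap.smul_apply, smul_eq_mul, Finset.mul_sum]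
  rw [Finset.sum_comm, ← Finset.sum_neg_distrib]
  refine Finset.sum_congr rfl fun p _ => ?_
  rw [← Finset.sum_neg_distrib]
  refine Finset.sum_congr rfl fun q _ => ?_
  rw [hΓ]
  ring

end CoefficientQuadraticMap

section LinearForms

variable {K σ : Type*} [CommRing K]

theorem pderiv_eq_C_of_isHomogeneous_one {f : MvPolynomial σ K} (hf : f.IsHomogeneous 1) (k : σ) :
    pderiv k f = C (coeff 0 (pderiv k f)) :=
  totalDegree_eq_zero_iff_eq_C.1 ((totalDegree_zero_iff_isHomogeneous σ).2 hf.pderiv)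

theorem eq_sum_C_mul_X_of_isHomogeneous_one [Fintype σ] {f : MvPolynomial σ K}
    (hf : f.IsHomogeneous 1) : f = ∑ k, C (coeff 0 (pderiv k f)) * X k := by
  calc f = ∑ k, X k * pderiv k f := by rw [hf.sum_X_mul_pderiv, one_smul]
    _ = _ := Finset.sum_congr rfl fun k _ => by
      rw [← pderiv_eq_C_of_isHomogeneous_one hf, mul_comm]

/-- The derivative of polynomials in the direction `y`. -/
noncomputable def dirDeriv (y : σ → K) :
    Derivation K (MvPolynomial σ K) (MvPolynomial σ K) :=
  mkDerivation K fun k => C (y k)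

theorem dirDeriv_of_isHomogeneous_one [Finite σ] {f : MvPolynomial σ K}
    (hf : f.IsHomogeneous 1) (y : σ → K) : dirDeriv y f = C (eval y f) := by
  cases nonempty_fintype σ
  rw [eq_sum_C_mul_X_of_isHomogeneous_one hf]
  simp only [dirDeriv, map_sum, Derivation.leibniz, derivation_C, mkDerivation_X, smul_eq_mul,
    mul_zero, add_zero, map_mul, eval_C, eval_X]

variable {m n p : Type*} [Fintype σ] [Fintype m]

/-- The action on row vectors of a matrix of linear forms, as a function of the variables; the
coefficients of the linear forms are read off from their derivatives. -/
noncomputable def linearFormAction (Φ : Matrix m n (MvPolynomial σ K)) :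
    (σ → K) →ₗ[K] (m → K) →ₗ[K] (n → K) :=
  Fintype.linearCombination K fun k => (Φ.map fun f => coeff 0 (pderiv k f)).vecMulLinear

theorem linearFormAction_single [DecidableEq σ] (Φ : Matrix m n (MvPolynomial σ K)) (k : σ)
    (α : m → K) : linearFormAction Φ (Pi.single k 1) α =
      Matrix.vecMul α (Φ.map fun f => coeff 0 (pderiv k f)) := by
  simp [linearFormAction]

theorem linearFormAction_apply {Φ : Matrix m n (MvPolynomial σ K)}
    (hΦ : ∀ i j, (Φ i j).IsHomogeneous 1) (x : σ → K) (α : m → K) :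
    linearFormAction Φ x α = Matrix.vecMul α (Φ.map (eval x)) := by
  have hΦx : Φ.map (eval x) = ∑ k, x k • Φ.map fun f => coeff 0 (pderiv k f) := by
    ext i j
    rw [Matrix.map_apply, eq_sum_C_mul_X_of_isHomogeneous_one (hΦ i j)]
    simp [Matrix.sum_apply, mul_comm]
  simp [linearFormAction, Fintype.linearCombination_apply, hΦx, Matrix.vecMul_sum,
    Matrix.vecMul_smul]

theorem linearFormAction_comp_self [Fintype n] {Φ : Matrix m n (MvPolynomial σ K)}
    {Ψ : Matrix n p (MvPolynomial σ K)} (hΦ : ∀ i j, (Φ i j).IsHomogeneous 1)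
    (hΨ : ∀ i j, (Ψ i j).IsHomogeneous 1) (hΦΨ : Φ * Ψ = 0) (x : σ → K) :
    linearFormAction Ψ x ∘ₗ linearFormAction Φ x = 0 := by
  refine LinearMap.ext fun α => ?_
  rw [LinearMap.comp_apply, linearFormAction_apply hΦ, linearFormAction_apply hΨ,
    Matrix.vecMul_vecMul, ← Matrix.map_mul, hΦΨ]
  simp

end LinearForms

section QuadraticPolynomial

variable {K ι η : Type*} [CommRing K] [Fintype ι] [LinearOrder ι]

/-- The polynomial `∑ i ≤ j, P(i, j)_q xᵢ xⱼ`. -/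
noncomputable def quadraticPolynomial (P : ι → ι → η → K) (q : η) : MvPolynomial ι K :=
  ∑ p : ι × ι with p.1 ≤ p.2, C (P p.1 p.2 q) * X p.1 * X p.2

theorem quadraticPolynomial_eq_sum_sum (P : ι → ι → η → K) (q : η) :
    quadraticPolynomial P q = ∑ i, ∑ j, if i ≤ j then C (P i j q) * X i * X j else 0 := by
  rw [quadraticPolynomial, Finset.sum_filter, Fintype.sum_prod_type]

theorem eval_quadraticPolynomial (P : ι → ι → η → K) (q : η) (x : ι → K) :
    eval x (quadraticPolynomial P q) = coeffQuadraticMap P x q := by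
  simp only [quadraticPolynomial, coeffQuadraticMap_apply, map_sum, map_mul, eval_C, eval_X,
    Finset.sum_apply, Pi.smul_apply, smul_eq_mul]
  exact Finset.sum_congr rfl fun p _ => by ring

theorem eval_dirDeriv_quadraticPolynomial (P : ι → ι → η → K) (q : η) (x y : ι → K) :
    eval x (dirDeriv y (quadraticPolynomial P q)) =
      QuadraticMap.polar (coeffQuadraticMap P) x y q := by
  simp only [quadraticPolynomial, dirDeriv, polar_coeffQuadraticMap, map_sum, Derivation.leibniz,
    mkDerivation_X, derivation_C, map_add, smul_eq_mul, map_mul, eval_C, eval_X, map_zero,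
    Finset.sum_apply, Pi.smul_apply]
  exact Finset.sum_congr rfl fun p _ => by ring

theorem pderiv_pderiv_quadraticPolynomial (P : ι → ι → η → K) (q : η) (u v : ι) :
    pderiv u (pderiv v (quadraticPolynomial P q)) =
      C (QuadraticMap.polar (coeffQuadraticMap P) (Pi.single u (1 : K)) (Pi.single v 1) q) := by
  have hX (i k : ι) : pderiv i (X k : MvPolynomial ι K) = C ((Pi.single i 1 : ι → K) k) := by
    rw [pderiv_X, Pi.single_apply, Pi.single_apply, apply_ite C, C_1, C_0]
  simp only [quadraticPolynomial, polar_coeffQuadraticMap, map_sum, Derivation.leibniz, hX,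
    derivation_C, map_zero, map_add, smul_eq_mul, map_mul, Finset.sum_apply, Pi.smul_apply]
  exact Finset.sum_congr rfl fun p _ => by ring

theorem sum_polar_mul_eval_eq_neg [Fintype η] {P : ι → ι → η → K} {f : η → MvPolynomial ι K}
    (hf : ∀ q, (f q).IsHomogeneous 1) (hPf : ∑ q, quadraticPolynomial P q * f q = 0)
    (x y : ι → K) :
    ∑ q, QuadraticMap.polar (coeffQuadraticMap P) x y q * eval x (f q) =
      -∑ q, coeffQuadraticMap P x q * eval y (f q) := by
  have h := congrArg (fun g => eval x (dirDeriv y g)) hPf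
  simp only [map_sum, Derivation.leibniz, smul_eq_mul, map_add, map_mul, map_zero,
    eval_dirDeriv_quadraticPolynomial, eval_quadraticPolynomial,
    dirDeriv_of_isHomogeneous_one (hf _), eval_C, Finset.sum_add_distrib] at h
  rw [eq_neg_iff_add_eq_zero, ← h, add_comm]
  simp only [mul_comm]

end QuadraticPolynomial

section BraceComplex

variable {K : Type*} [Field K] {N : ℕ} {b : ℕ → ℕ}

/-- A complex of `M + 3` matrices of polynomials whose outer differentials are the quadratic maps
with coefficients `P` and `Q`, whose inner differentials are linear, and whose braces are
antisymmetric. -/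
structure IsBraceComplex (M : ℕ)
    (φ : ∀ r : ℕ, Matrix (Fin (b r)) (Fin (b (r + 1))) (MvPolynomial (Fin N) K))
    (P : Fin N → Fin N → Fin (b 1) → K) (Q : Fin N → Fin N → Fin (b (M + 2)) → K) : Prop where
  b_zero : b 0 = 1
  b_last : b (M + 3) = 1
  mul_eq_zero : ∀ r ≤ M + 1, φ r * φ (r + 1) = 0
  isHomogeneous_one : ∀ r ≤ M, ∀ p q, (φ (r + 1) p q).IsHomogeneous 1
  left_symm : ∀ i j, P i j = P j i
  right_symm : ∀ i j, Q i j = Q j i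
  first_eq : ∀ p q, φ 0 p q = quadraticPolynomial P q
  last_eq : ∀ p q, φ (M + 2) p q = quadraticPolynomial Q p
  brace_antisymm : ∀ c : ℕ → Fin N,
    braceFn φ P (M + 3) Q rfl (M + 5) c = -braceFn φ P (M + 3) Q rfl (M + 5) fun r =>
      if r = 0 then c (M + 3) else if r = 1 then c (M + 4)
        else if r = M + 3 then c 0 else if r = M + 4 then c 1 else c r

/-- The action of a letter in degree `r`, truncated to the inner differentials. -/
noncomputable def letterAction (M : ℕ)
    (φ : ∀ r : ℕ, Matrix (Fin (b r)) (Fin (b (r + 1))) (MvPolynomial (Fin N) K)) (r : ℕ) :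
    (Fin N → K) →ₗ[K] (Fin (b (r + 1)) → K) →ₗ[K] (Fin (b (r + 2)) → K) :=
  if r ≤ M then linearFormAction (φ (r + 1)) else 0

/-- The brace `{α, w, β}` of a word of vectors, with arbitrary row `α` and column `β` in place of
the coefficients of the outer differentials. It vanishes unless `w` has length `M + 1`. -/
noncomputable def braceForm (M : ℕ)
    (φ : ∀ r : ℕ, Matrix (Fin (b r)) (Fin (b (r + 1))) (MvPolynomial (Fin N) K))
    (w : List (Fin N → K)) : (Fin (b 1) → K) →ₗ[K] (Fin (b (M + 2)) → K) →ₗ[K] K :=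
  wordPairing (letterAction M φ) (Pi.single (M + 1) (dotProductBilin K K)) w 0

variable {M : ℕ} {φ : ∀ r : ℕ, Matrix (Fin (b r)) (Fin (b (r + 1))) (MvPolynomial (Fin N) K)}

theorem sum_mul_C_eq_C_braceForm (hφ : ∀ r ≤ M, ∀ p q, (φ (r + 1) p q).IsHomogeneous 1)
    {ρ : ∀ r, Fin (b (r + 1)) → MvPolynomial (Fin N) K} {c : ℕ → Fin N} {α : Fin (b 1) → K}
    (hρ₀ : ∀ q, ρ 0 q = C (α q))
    (hρ : ∀ r ≤ M, ρ (r + 1) = Matrix.vecMul (ρ r) fun p q => pderiv (c r) (φ (r + 1) p q))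
    (β : Fin (b (M + 2)) → K) :
    ∑ p, ρ (M + 1) p * C (β p) =
      C (braceForm M φ (List.ofFn fun t : Fin (M + 1) => Pi.single (c t) 1) α β) := by
  let a : ∀ r, Fin (b (r + 1)) → K := fun r q => coeff 0 (ρ r q)
  have hstep (r : ℕ) (hr : r ≤ M) (hρa : ∀ q, ρ r q = C (a r q)) (q : Fin (b (r + 2))) :
      ρ (r + 1) q = C (letterAction M φ r (Pi.single (c r) 1) (a r) q) := by
    rw [hρ r hr, letterAction, if_pos hr, linearFormAction_single]
    simp only [Matrix.vecMul, dotProduct, map_sum, map_mul, Matrix.map_apply, hρa,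
      ← pderiv_eq_C_of_isHomogeneous_one (hφ r hr _ _)]
  have hconst (r : ℕ) (hr : r ≤ M + 1) (q : Fin (b (r + 1))) : ρ r q = C (a r q) := by
    induction r with
    | zero => simp [a, hρ₀]
    | succ r ih =>
      have h := hstep r (by omega) (ih (by omega)) q
      simp only [a, h, coeff_zero_C]
  have ha (r : ℕ) (hr : r < M + 1) : a (r + 1) = letterAction M φ r (Pi.single (c r) 1) (a r) := by
    funext q
    simp only [a, hstep r (by omega) (hconst r hr.le) q, coeff_zero_C]
  have hword := wordPairing_ofFn (γ := Pi.single (M + 1) (dotProductBilin K K)) ha (zero_add _)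
  have ha₀ : a 0 = α := by funext q; simp [a, hρ₀]
  simp only [zero_add, Pi.single_eq_same, ha₀] at hword
  rw [braceForm, hword]
  simp [hconst (M + 1) le_rfl, dotProduct]

theorem braceFn_eq_C_braceForm (hφ : ∀ r ≤ M, ∀ p q, (φ (r + 1) p q).IsHomogeneous 1)
    (P : Fin N → Fin N → Fin (b 1) → K) (Q : Fin N → Fin N → Fin (b (M + 2)) → K)
    (c : ℕ → Fin N) :
    braceFn φ P (M + 3) Q rfl (M + 5) c =
      C (braceForm M φ (List.ofFn fun t : Fin (M + 1) => Pi.single (c (t + 2)) 1)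
        (P (c 0) (c 1)) (Q (c (M + 3)) (c (M + 4)))) :=
  sum_mul_C_eq_C_braceForm (c := fun r => c (r + 2)) hφ (ρ := braceVec φ P c) (fun _ => rfl)
    (fun _ _ => rfl) _

theorem braceFn_eq_C_of_letters (hφ : ∀ r ≤ M, ∀ p q, (φ (r + 1) p q).IsHomogeneous 1)
    {P : Fin N → Fin N → Fin (b 1) → K} {Q : Fin N → Fin N → Fin (b (M + 2)) → K}
    {c : ℕ → Fin N} {f : Fin (M + 1) → Fin N} {i j k l : Fin N} (hi : c 0 = i) (hj : c 1 = j)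
    (hf : ∀ t : Fin (M + 1), c (t + 2) = f t) (hk : c (M + 3) = k) (hl : c (M + 4) = l) :
    braceFn φ P (M + 3) Q rfl (M + 5) c =
      C (braceForm M φ (List.ofFn fun t => Pi.single (f t) 1) (P i j) (Q k l)) := by
  rw [braceFn_eq_C_braceForm hφ, hi, hj, hk, hl]
  simp only [hf]

theorem isLinearMap_braceForm_append_cons (s t : List (Fin N → K)) :
    IsLinearMap K fun x => braceForm M φ (s ++ x :: t) :=
  isLinearMap_wordPairing_append_cons s t 0

theorem braceForm_eq_zero {w : List (Fin N → K)} (hw : w.length ≠ M + 1) :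
    braceForm M φ w = 0 :=
  wordPairing_eq_zero (fun _ hr => Pi.single_eq_of_ne hr _) (by rwa [zero_add])

namespace IsBraceComplex

variable {P : Fin N → Fin N → Fin (b 1) → K} {Q : Fin N → Fin N → Fin (b (M + 2)) → K}
  (h : IsBraceComplex M φ P Q)

include h

theorem letterAction_comp_self (r : ℕ) (x : Fin N → K) :
    letterAction M φ (r + 1) x ∘ₗ letterAction M φ r x = 0 := by
  by_cases hr : r + 1 ≤ M
  · rw [letterAction, letterAction, if_pos hr, if_pos (by omega)]
    exact linearFormAction_comp_self (h.isHomogeneous_one r (by omega))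
      (h.isHomogeneous_one (r + 1) hr) (h.mul_eq_zero (r + 1) (by omega)) x
  · rw [letterAction, if_neg hr, LinearMap.zero_apply, LinearMap.zero_comp]

theorem letterAction_polar (x y : Fin N → K) :
    letterAction M φ 0 x (QuadraticMap.polar (coeffQuadraticMap P) x y) =
      -letterAction M φ 0 y (coeffQuadraticMap P x) := by
  have hφ := h.isHomogeneous_one 0 (Nat.zero_le M)
  rw [letterAction, if_pos (Nat.zero_le M), linearFormAction_apply hφ, linearFormAction_apply hφ]
  funext q
  refine sum_polar_mul_eval_eq_neg (fun p => hφ p q) ?_ x y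
  have hmul := congrFun₂ (h.mul_eq_zero 0 (by omega)) (Fin.cast h.b_zero.symm 0) q
  simpa only [Matrix.mul_apply, h.first_eq, Matrix.zero_apply] using hmul

theorem dotProduct_letterAction_polar (x y : Fin N → K) (α : Fin (b (M + 1)) → K) :
    letterAction M φ M x α ⬝ᵥ QuadraticMap.polar (coeffQuadraticMap Q) x y =
      -(letterAction M φ M y α ⬝ᵥ coeffQuadraticMap Q x) := by
  have hφ := h.isHomogeneous_one M le_rfl
  rw [letterAction, if_pos le_rfl, linearFormAction_apply hφ, linearFormAction_apply hφ,
    ← Matrix.dotProduct_mulVec, ← Matrix.dotProduct_mulVec, ← dotProduct_neg]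
  congr 1
  funext p
  have hmul := congrFun₂ (h.mul_eq_zero (M + 1) le_rfl) p (Fin.cast h.b_last.symm 0)
  have hQ := sum_polar_mul_eval_eq_neg (P := Q) (fun q => hφ p q)
    (by simpa only [Matrix.mul_apply, h.last_eq, Matrix.zero_apply, mul_comm] using hmul) x y
  simpa only [Matrix.mulVec, dotProduct, Matrix.map_apply, Pi.neg_apply, mul_comm] using hQ

theorem braceForm_concat_polar (x y : Fin N → K) (w : List (Fin N → K)) (α : Fin (b 1) → K) :
    braceForm M φ (w ++ [x]) α (QuadraticMap.polar (coeffQuadraticMap Q) x y) =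
      -braceForm M φ (w ++ [y]) α (coeffQuadraticMap Q x) := by
  rw [← map_neg]
  refine wordPairing_concat_congr (A := letterAction M φ) (fun r α => ?_) w 0 α
  obtain rfl | hr := eq_or_ne r M
  · simpa using h.dotProduct_letterAction_polar x y α
  · simp [Pi.single_eq_of_ne (show r + 1 ≠ M + 1 by omega)]

theorem braceForm_basis_antisymm (l : List (Fin N)) (i j k k' : Fin N) :
    braceForm M φ (l.map (Pi.basisFun K (Fin N))) (P i j) (Q k k') =
      -braceForm M φ (l.map (Pi.basisFun K (Fin N))) (P k k') (Q i j) := by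
  by_cases hl : l.length = M + 1
  swap
  · simp [braceForm_eq_zero (φ := φ) (w := l.map (Pi.basisFun K (Fin N))) (by simpa using hl)]
  obtain ⟨f, rfl⟩ : ∃ f : Fin (M + 1) → Fin N, l = List.ofFn f :=
    ⟨fun t => l[t], List.ext_getElem (by simp [hl]) (by simp [-List.ofFn_succ])⟩
  let c : ℕ → Fin N := fun r => if r = 0 then i else if r = 1 then j
    else if hr : r - 2 < M + 1 then f ⟨r - 2, hr⟩ else if r = M + 3 then k else k'
  have hc := h.brace_antisymm c
  rw [braceFn_eq_C_braceForm h.isHomogeneous_one, braceFn_eq_C_braceForm h.isHomogeneous_one,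
    ← C_neg] at hc
  have ht (t : Fin (M + 1)) : (t : ℕ) ≤ M ∧ (t : ℕ) ≠ M + 1 ∧ (t : ℕ) ≠ M + 2 := by omega
  simpa [c, ht, List.map_ofFn, Function.comp_def, -List.ofFn_succ] using C_injective _ _ hc

theorem braceForm_antisymm (w : List (Fin N → K)) (x y : Fin N → K) :
    braceForm M φ w (coeffQuadraticMap P x) (coeffQuadraticMap Q y) =
      -braceForm M φ w (coeffQuadraticMap P y) (coeffQuadraticMap Q x) := by
  rw [eq_neg_iff_add_eq_zero]
  refine eq_zero_of_forall_basis_word (Pi.basisFun K (Fin N)) (F := fun w =>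
    braceForm M φ w (coeffQuadraticMap P x) (coeffQuadraticMap Q y) +
      braceForm M φ w (coeffQuadraticMap P y) (coeffQuadraticMap Q x)) (fun s t => ?_)
    (fun l => ?_) w
  · have hlin := isLinearMap_braceForm_append_cons (M := M) (φ := φ) s t
    exact ⟨fun u v => by simp only [hlin.map_add, LinearMap.add_apply]; ring,
      fun a u => by simp only [hlin.map_smul, LinearMap.smul_apply, smul_eq_mul]; ring⟩
  · rw [coeffQuadraticMap_antisymm (h.braceForm_basis_antisymm l), neg_add_cancel]

/-- The brace system of a brace complex. -/
@[simps]
noncomputable def braceSystem :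
    BraceSystem K (Fin N → K) (Fin (b 1) → K) (Fin (b (M + 2)) → K) where
  brace := braceForm M φ
  left := coeffQuadraticMap P
  right := coeffQuadraticMap Q
  brace_add s x y t := (isLinearMap_braceForm_append_cons s t).map_add x y
  brace_self s x t := wordPairing_append_self h.letterAction_comp_self s x t 0
  brace_cons_polar x y w := by simp [braceForm, wordPairing, h.letterAction_polar]
  brace_concat_polar := h.braceForm_concat_polar
  brace_antisymm := h.braceForm_antisymm

end IsBraceComplex

end BraceComplex

namespace IsBraceComplex

variable {K : Type*} [Field K] {b : ℕ → ℕ} {M : ℕ}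

section Bracket

variable {N : ℕ}
  {φ : ∀ r : ℕ, Matrix (Fin (b r)) (Fin (b (r + 1))) (MvPolynomial (Fin N) K)}
  {P : Fin N → Fin N → Fin (b 1) → K} {Q : Fin N → Fin N → Fin (b (M + 2)) → K}
  (h : IsBraceComplex M φ P Q)

include h

theorem sum_pderiv_brkVec_mul_C (a : ℕ → Fin N) (v : Fin N) (β : Fin (b (M + 2)) → K) :
    ∑ p, pderiv v (brkVec φ a (M + 2) p) * C (β p) =
      C (h.braceSystem.brace (List.ofFn fun t : Fin (M + 1) => Pi.single (a (t + 1)) 1)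
        (QuadraticMap.polar h.braceSystem.left (Pi.single (a 0) 1) (Pi.single v 1)) β) := by
  refine sum_mul_C_eq_C_braceForm (c := fun r => a (r + 1)) h.isHomogeneous_one
    (ρ := fun r q => pderiv v (brkVec φ a (r + 1) q)) (fun q => ?_) (fun r hr => ?_) β
  · have hfirst : brkVec φ a 1 q = pderiv (a 0) (quadraticPolynomial P q) := by
      simp [brkVec, Matrix.vecMul, dotProduct, h.first_eq, h.b_zero]
    rw [hfirst, pderiv_pderiv_quadraticPolynomial, QuadraticMap.polar_comm]
    rfl
  · funext q
    change pderiv v (∑ p, brkVec φ a (r + 1) p * pderiv (a (r + 1)) (φ (r + 1) p q)) =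
      ∑ p, pderiv v (brkVec φ a (r + 1) p) * pderiv (a (r + 1)) (φ (r + 1) p q)
    rw [map_sum]
    refine Finset.sum_congr rfl fun p _ => ?_
    rw [pderiv_mul, pderiv_eq_C_of_isHomogeneous_one (h.isHomogeneous_one r hr p q) (a (r + 1)),
      pderiv_C, mul_zero, add_zero]

theorem pderiv_pderiv_brkVec (a : ℕ → Fin N) (u v : Fin N) (p : Fin (b (M + 2))) :
    pderiv u (pderiv v (brkVec φ a (M + 2) p)) = 0 := by
  have hconst := h.sum_pderiv_brkVec_mul_C a v (Pi.single p 1)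
  simp only [Pi.single_apply, apply_ite C, C_1, C_0, mul_ite, mul_one, mul_zero,
    Finset.sum_ite_eq', Finset.mem_univ, if_true] at hconst
  rw [hconst, pderiv_C]

theorem brk_eq_sum (a : ℕ → Fin N) : brk φ (M + 3) a =
    ∑ p, brkVec φ a (M + 2) p * pderiv (a (M + 2)) (quadraticPolynomial Q p) := by
  simp [brk, brkVec, Matrix.vecMul, dotProduct, h.last_eq, h.b_last]

theorem pderiv_pderiv_brk (a : ℕ → Fin N) (u v : Fin N) :
    pderiv u (pderiv v (brk φ (M + 3) a)) = C (h.braceSystem.bracketHess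
      (List.ofFn fun t : Fin (M + 3) => Pi.single (a t) 1) (Pi.single u 1) (Pi.single v 1)) := by
  have hterm (p : Fin (b (M + 2))) : pderiv u (pderiv v
      (brkVec φ a (M + 2) p * pderiv (a (M + 2)) (quadraticPolynomial Q p))) =
      pderiv u (brkVec φ a (M + 2) p) * C (QuadraticMap.polar h.braceSystem.right
        (Pi.single (a (M + 2)) 1) (Pi.single v 1) p) +
      pderiv v (brkVec φ a (M + 2) p) * C (QuadraticMap.polar h.braceSystem.right
        (Pi.single (a (M + 2)) 1) (Pi.single u 1) p) := by
    simp only [pderiv_mul, map_add, h.pderiv_pderiv_brkVec, pderiv_pderiv_quadraticPolynomial,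
      pderiv_C]
    rw [QuadraticMap.polar_comm _ (Pi.single v 1), QuadraticMap.polar_comm _ (Pi.single u 1)]
    simp only [braceSystem]
    ring
  have hlist : (List.ofFn fun t : Fin (M + 3) => (Pi.single (a t) 1 : Fin N → K)) =
      Pi.single (a 0) 1 :: ((List.ofFn fun t : Fin (M + 1) => Pi.single (a (t + 1)) 1) ++
        [Pi.single (a (M + 2)) 1]) := by
    rw [List.ofFn_succ, List.ofFn_succ_last]
    rfl
  rw [h.brk_eq_sum, map_sum, map_sum, Finset.sum_congr rfl fun p _ => hterm p,
    Finset.sum_add_distrib, h.sum_pderiv_brkVec_mul_C, h.sum_pderiv_brkVec_mul_C, ← C_add,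
    hlist, BraceSystem.bracketHess_cons_concat]

theorem pderiv_pderiv_dbrk (a : ℕ → Fin N) (u v : Fin N) :
    pderiv u (pderiv v (dbrk φ (M + 3) a)) = C (h.braceSystem.doubleBracketHess
      (List.ofFn fun t : Fin (M + 3) => Pi.single (a t) 1) (Pi.single u 1) (Pi.single v 1)) := by
  have hrotate (k : ℕ) : (List.ofFn fun t : Fin (M + 3) =>
      (Pi.single (a ((t + 2 * (k + 1)) % (M + 3))) 1 : Fin N → K)) =
      (List.ofFn fun t : Fin (M + 3) => Pi.single (a t) 1).rotate (2 * (k + 1)) :=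
    List.ext_getElem (by simp) fun r _ _ => by simp [List.getElem_rotate, -List.ofFn_succ]
  simp only [dbrk, map_sum, h.pderiv_pderiv_brk, hrotate, BraceSystem.doubleBracketHess,
    List.length_ofFn]

end Bracket

end IsBraceComplex

theorem omitIdx_eq_succAbove {k : ℕ} (j : Fin (k + 1)) (r : Fin k) :
    omitIdx j r = j.succAbove r := by
  rcases lt_or_ge (r : ℕ) j with hr | hr
  · rw [omitIdx, dif_pos hr, Fin.succAbove_of_castSucc_lt _ _ hr]
    rfl
  · rw [omitIdx, dif_neg hr.not_gt, dif_pos (by omega), Fin.succAbove_of_le_castSucc _ _ hr]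
    rfl

theorem exists_perm_succAbove {k : ℕ} (π : Equiv.Perm (Fin (k + 1))) :
    ∃ τ : Equiv.Perm (Fin k), (∀ r, π r.succ = (π 0).succAbove (τ r)) ∧
      Equiv.Perm.sign π = (-1) ^ (π 0 : ℕ) * Equiv.Perm.sign τ := by
  obtain ⟨⟨p, τ⟩, hτ⟩ :=
    Equiv.Perm.decomposeFin.symm.surjective (Fin.cycleRange (π 0) * π)
  obtain rfl : p = 0 := by
    rw [← Equiv.Perm.decomposeFin_symm_apply_zero p τ, hτ]
    simp
  have hπ : π = (Fin.cycleRange (π 0))⁻¹ * Equiv.Perm.decomposeFin.symm (0, τ) := by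
    rw [hτ, inv_mul_cancel_left]
  refine ⟨τ, fun r => ?_, ?_⟩
  · conv_lhs => rw [hπ]
    simp [Equiv.Perm.inv_def]
  · conv_lhs => rw [hπ]
    rw [Equiv.Perm.sign_mul, Equiv.Perm.sign_inv, Fin.sign_cycleRange,
      Equiv.Perm.decomposeFin.symm_sign]
    simp

/-- The word of basis vectors `e_{π 3}, e_{π 4}, …, e_{π (M + 3)}`. -/
def permTail (K : Type*) [Field K] {M : ℕ} (π : Equiv.Perm (Fin (M + 4))) :
    List (Fin (M + 4) → K) :=
  List.ofFn fun r : Fin (M + 1) => Pi.single (π r.succ.succ.succ) 1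

theorem length_permTail (K : Type*) [Field K] {M : ℕ} (π : Equiv.Perm (Fin (M + 4))) :
    (permTail K π).length = M + 1 :=
  List.length_ofFn

theorem permTail_ne_nil (K : Type*) [Field K] {M : ℕ} (π : Equiv.Perm (Fin (M + 4))) :
    permTail K π ≠ [] :=
  List.ne_nil_of_length_eq_add_one (length_permTail K π)

theorem single_cons_permTail (K : Type*) [Field K] {M : ℕ} (π : Equiv.Perm (Fin (M + 4))) :
    Pi.single (π 2) 1 :: permTail K π =
      (List.ofFn fun t : Fin (M + 1) => Pi.single (π t.succ.succ.castSucc) 1) ++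
        [Pi.single (π (Fin.last (M + 3))) 1] := by
  have hsplit := List.ofFn_succ' fun r : Fin (M + 2) =>
    (Pi.single (π r.succ.succ) 1 : Fin (M + 4) → K)
  rwa [List.ofFn_succ, List.concat_eq_append] at hsplit

theorem permTail_mul_swap (K : Type*) [Field K] {M : ℕ} (π : Equiv.Perm (Fin (M + 4)))
    {x y : Fin (M + 4)} (hx : (x : ℕ) < 3) (hy : (y : ℕ) < 3) :
    permTail K (π * Equiv.swap x y) = permTail K π := by
  refine congrArg List.ofFn (funext fun r => ?_)
  rw [Equiv.Perm.mul_apply, Equiv.swap_apply_of_ne_of_ne] <;>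
    simp only [ne_eq, Fin.ext_iff, Fin.val_succ] <;> omega

namespace IsBraceComplex

variable {K : Type*} [Field K] {b : ℕ → ℕ} {M : ℕ}

section Omega

variable {φ : ∀ r : ℕ, Matrix (Fin (b r)) (Fin (b (r + 1))) (MvPolynomial (Fin (M + 4)) K)}
  {P : Fin (M + 4) → Fin (M + 4) → Fin (b 1) → K}
  {Q : Fin (M + 4) → Fin (M + 4) → Fin (b (M + 2)) → K}
  (h : IsBraceComplex M φ P Q) (π : Equiv.Perm (Fin (M + 4))) (u v : Fin (M + 4))

include h

theorem pderiv_pderiv_OmegaForm_zero :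
    pderiv u (pderiv v (OmegaForm φ (M + 3) (π 0))) =
      C (-(Equiv.Perm.sign π : ℤ) * h.braceSystem.doubleBracketHess
        (Pi.single (π 1) 1 :: Pi.single (π 2) 1 :: permTail K π)
        (Pi.single u 1) (Pi.single v 1)) := by
  obtain ⟨τ, hτ, hsign⟩ := exists_perm_succAbove π
  have hword : (Pi.single (π 1) 1 :: Pi.single (π 2) 1 :: permTail K π : List (Fin (M + 4) → K)) =
      List.ofFn ((fun r => Pi.single ((π 0).succAbove r) 1) ∘ τ) := by
    simp only [Function.comp_def, ← hτ]
    simp [permTail, List.ofFn_succ]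
  have hconst : (-1 : MvPolynomial (Fin (M + 4)) K) ^ ((π 0 : ℕ) + 1) =
      C ((-1) ^ ((π 0 : ℕ) + 1)) := by simp
  have hsq : ((Equiv.Perm.sign τ : ℤ) : K) * (Equiv.Perm.sign τ : ℤ) = 1 := by
    rw [← Int.cast_mul, ← Units.val_mul, Int.units_mul_self, Units.val_one, Int.cast_one]
  rw [hword, (h.braceSystem.swapAntisymm_doubleBracketHess _ _).apply_ofFn_comp_perm, OmegaForm,
    hconst, pderiv_C_mul, pderiv_C_mul, h.pderiv_pderiv_dbrk, hsign, ← C_mul]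
  simp only [omitIdx_eq_succAbove]
  congr 1
  push_cast
  generalize h.braceSystem.doubleBracketHess _ _ _ = D
  linear_combination -(-1) ^ ((π 0 : ℕ) + 1) * D * hsq

theorem pderiv_pderiv_OmegaForm_one :
    pderiv u (pderiv v (OmegaForm φ (M + 3) (π 1))) =
      C ((Equiv.Perm.sign π : ℤ) * h.braceSystem.doubleBracketHess
        (Pi.single (π 0) 1 :: Pi.single (π 2) 1 :: permTail K π)
        (Pi.single u 1) (Pi.single v 1)) := by
  have hfix : Equiv.swap (0 : Fin (M + 4)) 1 2 = 2 :=
    Equiv.swap_apply_of_ne_of_ne (by simp [Fin.ext_iff, Nat.mod_eq_of_lt])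
      (by simp [Fin.ext_iff, Nat.mod_eq_of_lt])
  have hswap := h.pderiv_pderiv_OmegaForm_zero (π * Equiv.swap 0 1) u v
  rw [permTail_mul_swap K π (by simp) (by simp)] at hswap
  simpa [Equiv.Perm.sign_swap zero_ne_one, hfix] using hswap

theorem pderiv_pderiv_OmegaForm_two :
    pderiv u (pderiv v (OmegaForm φ (M + 3) (π 2))) =
      C ((Equiv.Perm.sign π : ℤ) * h.braceSystem.doubleBracketHess
        (Pi.single (π 1) 1 :: Pi.single (π 0) 1 :: permTail K π)
        (Pi.single u 1) (Pi.single v 1)) := by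
  have h02 : (0 : Fin (M + 4)) ≠ 2 := by simp [Fin.ext_iff, Nat.mod_eq_of_lt]
  have hfix : Equiv.swap (0 : Fin (M + 4)) 2 1 = 1 :=
    Equiv.swap_apply_of_ne_of_ne one_ne_zero (by simp [Fin.ext_iff, Nat.mod_eq_of_lt])
  have hswap := h.pderiv_pderiv_OmegaForm_zero (π * Equiv.swap 0 2) u v
  rw [permTail_mul_swap K π (by simp) (by simp [Nat.mod_eq_of_lt])] at hswap
  simpa [Equiv.Perm.sign_swap h02, hfix] using hswap

end Omega

section Identities

variable {φ : ∀ r : ℕ, Matrix (Fin (b r)) (Fin (b (r + 1))) (MvPolynomial (Fin (M + 4)) K)}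
  {P : Fin (M + 4) → Fin (M + 4) → Fin (b 1) → K}
  {Q : Fin (M + 4) → Fin (M + 4) → Fin (b (M + 2)) → K}
  (h : IsBraceComplex M φ P Q) {π : Equiv.Perm (Fin (M + 4))} {i j k : Fin (M + 4)}

include h

theorem pderiv_pderiv_OmegaForm_of_distinct (hi : π 0 = i) (hj : π 1 = j) (hk : π 2 = k) :
    pderiv i (pderiv j (OmegaForm φ (M + 3) k)) =
      ((-1 : ℤ) ^ (M + 5 + 1) * (Equiv.Perm.sign π : ℤ) * (2 * (M + 5 : ℕ))) •
        C (braceForm M φ (permTail K π) (P i i) (Q j j)) := by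
  subst hi hj hk
  have hD := h.braceSystem.doubleBracketHess_cons_cons (Pi.single (π 0) 1) (Pi.single (π 1) 1)
    (permTail_ne_nil K π)
  simp only [length_permTail, braceSystem_brace, braceSystem_left, braceSystem_right,
    coeffQuadraticMap_single] at hD
  rw [h.pderiv_pderiv_OmegaForm_two, hD, ← map_zsmul, zsmul_eq_mul]
  congr 1
  push_cast
  ring

theorem pderiv_pderiv_OmegaForm_sub (hi : π 0 = i) (hj : π 1 = j) (hk : π 2 = k) :
    pderiv i (pderiv j (OmegaForm φ (M + 3) j)) -
        pderiv i (pderiv k (OmegaForm φ (M + 3) k)) =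
      ((-1 : ℤ) ^ (M + 5) * (Equiv.Perm.sign π : ℤ) * (2 * (M + 5 : ℕ))) •
        C (braceForm M φ (permTail K π) (P i i) (Q j k)) := by
  subst hi hj hk
  have hne : π 1 ≠ π 2 := π.injective.ne (by simp [Fin.ext_iff, Nat.mod_eq_of_lt])
  have hD := h.braceSystem.doubleBracketHess_cons_cons_add (Pi.single (π 0) 1)
    (Pi.single (π 1) 1) (permTail_ne_nil K π) (Pi.single (π 2) 1)
  have hswap := h.braceSystem.swapAntisymm_doubleBracketHess (Pi.single (π 0) 1)
    (Pi.single (π 1) 1) [] (Pi.single (π 0) 1) (Pi.single (π 2) 1) (permTail K π)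
  simp only [length_permTail, braceSystem_brace, braceSystem_left, braceSystem_right,
    coeffQuadraticMap_single, polar_coeffQuadraticMap_single h.right_symm hne,
    List.nil_append] at hD hswap
  rw [h.pderiv_pderiv_OmegaForm_one, h.pderiv_pderiv_OmegaForm_two, ← map_sub, ← map_zsmul,
    zsmul_eq_mul]
  congr 1
  push_cast at hD ⊢
  linear_combination (Equiv.Perm.sign π : ℤ) * hswap - (Equiv.Perm.sign π : ℤ) * hD

theorem pderiv_pderiv_OmegaForm_sub_sub (hi : π 0 = i) (hj : π 1 = j) (hk : π 2 = k) :
    pderiv i (pderiv i (OmegaForm φ (M + 3) i)) -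
        pderiv i (pderiv j (OmegaForm φ (M + 3) j)) -
        pderiv i (pderiv k (OmegaForm φ (M + 3) k)) =
      ((-1 : ℤ) ^ (M + 5 + 1) * (Equiv.Perm.sign π : ℤ) * (2 * (M + 5 : ℕ))) •
        C (braceForm M φ (permTail K π) (P i j) (Q k i)) := by
  subst hi hj hk
  have h01 : π 0 ≠ π 1 := π.injective.ne zero_ne_one
  have h20 : π 2 ≠ π 0 := π.injective.ne (by simp [Fin.ext_iff, Nat.mod_eq_of_lt])
  have hD := h.braceSystem.doubleBracketHess_three_term (Pi.single (π 0) 1)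
    (Pi.single (π 1) 1) (permTail_ne_nil K π) (Pi.single (π 2) 1)
  simp only [length_permTail, braceSystem_brace, braceSystem_left, braceSystem_right,
    polar_coeffQuadraticMap_single h.left_symm h01,
    polar_coeffQuadraticMap_single h.right_symm h20] at hD
  rw [h.pderiv_pderiv_OmegaForm_zero, h.pderiv_pderiv_OmegaForm_one,
    h.pderiv_pderiv_OmegaForm_two, ← map_sub, ← map_sub, ← map_zsmul, zsmul_eq_mul]
  congr 1
  push_cast at hD ⊢
  linear_combination -(Equiv.Perm.sign π : ℤ) * hD

theorem pderiv_pderiv_OmegaForm_self (hi : π 0 = i) (hj : π 1 = j) :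
    pderiv i (pderiv i (OmegaForm φ (M + 3) j)) =
      ((Equiv.Perm.sign π : ℤ) * (2 * (M + 5 : ℕ))) •
        C (braceForm M φ
          (List.ofFn fun t : Fin (M + 1) => Pi.single (π t.succ.succ.castSucc) 1)
          (P i i) (Q (π (Fin.last (M + 3))) i)) := by
  subst hi hj
  set W : List (Fin (M + 4) → K) :=
    List.ofFn fun t : Fin (M + 1) => Pi.single (π t.succ.succ.castSucc) 1
  set z := π (Fin.last (M + 3))
  have hlen : W.length = M + 1 := List.length_ofFn
  have hne : z ≠ π 0 := π.injective.ne Fin.last_pos.ne'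
  have hword : Pi.single (π 2) 1 :: permTail K π = W ++ [Pi.single z 1] :=
    single_cons_permTail K π
  have hD := h.braceSystem.doubleBracketHess_cons_cons_self (Pi.single (π 0) 1)
    (Pi.single z 1) (List.ne_nil_of_length_eq_add_one hlen)
  have hmove := (h.braceSystem.swapAntisymm_doubleBracketHess (Pi.single (π 0) 1)
    (Pi.single (π 0) 1)).apply_append_cons (Pi.single (π 0) 1 :: W) (Pi.single z 1) []
  simp only [hlen, braceSystem_brace, braceSystem_left, braceSystem_right, List.length_cons,
    List.cons_append, List.append_nil, coeffQuadraticMap_single,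
    polar_coeffQuadraticMap_single h.right_symm hne] at hD hmove
  have hsq : ((-1 : K) ^ (M + 2)) ^ 2 = 1 := by rw [← pow_mul, mul_comm, pow_mul]; simp
  rw [h.pderiv_pderiv_OmegaForm_one, hword, hmove, hD, ← map_zsmul, zsmul_eq_mul]
  congr 1
  push_cast
  linear_combination (Equiv.Perm.sign π : ℤ) * (2 * (M + 5)) *
    braceForm M φ W (P (π 0) (π 0)) (Q z (π 0)) * hsq

end Identities

end IsBraceComplex

/-- Theorem 9.1 of the paper: with the bracket and brace setup and the brace
antisymmetry `{i,j,…,k,ℓ} = −{k,ℓ,…,i,j}`, the second partial derivatives of the forms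
`Ω_j = (−1)^j·[[1,…,ĵ,…,n−1]]` are given by the identities (12)–(15), with signs
`ε_{ij}`/`ε_{ijk}` the signs of the permutations `ρ`/`π` taking `1,…,n−1` to
`i,j,1,…,îĵ,…,n−1` resp. `i,j,k,1,…,îĵk̂,…,n−1` (characterized by their first values and
strict monotonicity on the remaining positions). -/
theorem stmt16 (K : Type*) [Field K] (n : ℕ) (hn : 5 ≤ n) (m : ℕ) (hm : m = n - 2)
    (b : ℕ → ℕ) (hbpos : ∀ r, r ≤ m → 0 < b r) (hb0 : b 0 = 1) (hbm : b m = 1)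
    (φ : ∀ r : ℕ, Matrix (Fin (b r)) (Fin (b (r + 1))) (MvPolynomial (Fin (n - 1)) K))
    (hcomp : ∀ r, r + 2 ≤ m → φ r * φ (r + 1) = 0)
    (hdeg1 : ∀ p q, (φ 0 p q).IsHomogeneous 2)
    (hdegm : ∀ p q, (φ (m - 1) p q).IsHomogeneous 2)
    (hdegmid : ∀ r, 1 ≤ r → r + 2 ≤ m → ∀ p q, (φ r p q).IsHomogeneous 1)
    (P : Fin (n - 1) → Fin (n - 1) → Fin (b 1) → K)
    (Q : Fin (n - 1) → Fin (n - 1) → Fin (b (m - 1)) → K)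
    (hPsymm : ∀ i j, P i j = P j i) (hQsymm : ∀ i j, Q i j = Q j i)
    (hP : ∀ (p : Fin (b 0)) (q : Fin (b 1)),
      φ 0 p q = ∑ i : Fin (n - 1), ∑ j : Fin (n - 1),
        if i ≤ j then C (P i j q) * X i * X j else 0)
    (hQ : ∀ (p : Fin (b (m - 1))) (q : Fin (b (m - 1 + 1))),
      φ (m - 1) p q = ∑ i : Fin (n - 1), ∑ j : Fin (n - 1),
        if i ≤ j then C (Q i j p) * X i * X j else 0)
    -- brace antisymmetry `{i, j, a_1, …, a_{n−4}, k, ℓ} = −{k, ℓ, a_1, …, a_{n−4}, i, j}`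
    (hanti : ∀ c : ℕ → Fin (n - 1),
      braceFn φ P m Q (by omega) n c
        = - braceFn φ P m Q (by omega) n
            (fun r => if r = 0 then c (n - 2) else if r = 1 then c (n - 1)
              else if r = n - 2 then c 0 else if r = n - 1 then c 1 else c r))
    (i j k : Fin (n - 1)) (hij : i ≠ j) (hjk : j ≠ k) (hik : i ≠ k)
    -- `π` realizes `i, j, k, 1, …, îĵk̂, …, n−1`; `sign π = ε_{ijk}`
    (π : Equiv.Perm (Fin (n - 1)))
    (hπ0 : π ⟨0, by omega⟩ = i) (hπ1 : π ⟨1, by omega⟩ = j) (hπ2 : π ⟨2, by omega⟩ = k)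
    (hπmono : ∀ s t : Fin (n - 1), 3 ≤ (s : ℕ) → s < t → π s < π t)
    -- `ρ` realizes `i, j, 1, …, îĵ, …, n−1`; `sign ρ = ε_{ij}`
    (ρ : Equiv.Perm (Fin (n - 1)))
    (hρ0 : ρ ⟨0, by omega⟩ = i) (hρ1 : ρ ⟨1, by omega⟩ = j)
    (hρmono : ∀ s t : Fin (n - 1), 2 ≤ (s : ℕ) → s < t → ρ s < ρ t) :
    -- (12)  ∂²Ω_k/∂xᵢ∂xⱼ = (−1)^{n+1}·ε_{ijk}·2n·{i,i,1,…,îĵk̂,…,n−1,j,j}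
    (pderiv i (pderiv j (OmegaForm φ m k))
        = ((-1 : ℤ) ^ (n + 1) * (Equiv.Perm.sign π : ℤ) * (2 * n)) •
            braceFn φ P m Q (by omega) n
              (fun r => if r = 0 ∨ r = 1 then i
                else if h : r < n - 2 then π ⟨r + 1, by omega⟩ else j))
    -- (13)  ∂²Ω_j/∂xᵢ² = ε_{ij}·2n·{i,i,1,…,îĵ,…,n−1,i}
    ∧ (pderiv i (pderiv i (OmegaForm φ m j))
        = ((Equiv.Perm.sign ρ : ℤ) * (2 * n)) •
            braceFn φ P m Q (by omega) n
              (fun r => if r = 0 ∨ r = 1 then i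
                else if h : 2 ≤ r ∧ r ≤ n - 2 then ρ ⟨r, by omega⟩ else i))
    -- (14)  ∂²Ω_j/∂xᵢ∂xⱼ − ∂²Ω_k/∂xᵢ∂x_k = (−1)^n·ε_{ijk}·2n·{i,i,1,…,îĵk̂,…,n−1,j,k}
    ∧ (pderiv i (pderiv j (OmegaForm φ m j)) - pderiv i (pderiv k (OmegaForm φ m k))
        = ((-1 : ℤ) ^ n * (Equiv.Perm.sign π : ℤ) * (2 * n)) •
            braceFn φ P m Q (by omega) n
              (fun r => if r = 0 ∨ r = 1 then i
                else if h : r < n - 2 then π ⟨r + 1, by omega⟩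
                else if r = n - 2 then j else k))
    -- (15)  ∂²Ω_i/∂xᵢ² − ∂²Ω_j/∂xᵢ∂xⱼ − ∂²Ω_k/∂xᵢ∂x_k
    --         = (−1)^{n+1}·ε_{ijk}·2n·{i,j,1,…,îĵk̂,…,n−1,k,i}
    ∧ (pderiv i (pderiv i (OmegaForm φ m i))
          - pderiv i (pderiv j (OmegaForm φ m j)) - pderiv i (pderiv k (OmegaForm φ m k))
        = ((-1 : ℤ) ^ (n + 1) * (Equiv.Perm.sign π : ℤ) * (2 * n)) •
            braceFn φ P m Q (by omega) n
              (fun r => if r = 0 then i else if r = 1 then j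
                else if h : r < n - 2 then π ⟨r + 1, by omega⟩
                else if r = n - 2 then k else i)) := by
  obtain ⟨M, rfl⟩ : ∃ M, n = M + 5 := ⟨n - 5, by omega⟩
  obtain rfl : m = M + 3 := hm
  have h : IsBraceComplex M φ P Q :=
    { b_zero := hb0
      b_last := hbm
      mul_eq_zero := fun r hr => hcomp r (by omega)
      isHomogeneous_one := fun r hr => hdegmid (r + 1) (by omega) (by omega)
      left_symm := hPsymm
      right_symm := hQsymm
      first_eq := fun p q => (hP p q).trans (quadraticPolynomial_eq_sum_sum P q).symm
      last_eq := fun p q => (hQ p q).trans (quadraticPolynomial_eq_sum_sum Q p).symm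
      brace_antisymm := hanti }
  have ht (t : Fin (M + 1)) : (t : ℕ) ≤ M := t.is_le
  refine ⟨(h.pderiv_pderiv_OmegaForm_of_distinct hπ0 hπ1 hπ2).trans ?_,
    (h.pderiv_pderiv_OmegaForm_self hρ0 hρ1).trans ?_,
    (h.pderiv_pderiv_OmegaForm_sub hπ0 hπ1 hπ2).trans ?_,
    (h.pderiv_pderiv_OmegaForm_sub_sub hπ0 hπ1 hπ2).trans ?_⟩ <;>
  refine congrArg _ (braceFn_eq_C_of_letters h.isHomogeneous_one ?_ ?_ (fun t => ?_) ?_ ?_).symm <;>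
  simp [ht] <;> rfl
end

section
/- Let R be a commutative ring and a, b, c, d ∈ R. Define a multiplication on the free R-module with basis 1, ω, θ by declaring 1 to be the multiplicative identity, ω² = −ac·1 − b·ω + a·θ, ω·θ = θ·ω = −ad·1, and θ² = −bd·1 − d·ω + c·θ, extended R-bilinearly. Then this multiplication makes the free R-module R·1 ⊕ R·ω ⊕ R·θ into a commutative and associative unital R-algebra (a ring of rank 3 over R). -/
/-!
For a commutative multiplication, associativity says that the left multiplications commute
with one another. By bilinearity every left multiplication is an `R`-combination of the identity and
the left multiplications by `ω` and `θ`, so everything reduces to the fact that these two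
endomorphisms commute, which is checked on the basis `1, ω, θ`.
-/

theorem assoc_of_comm_of_left_comm {α : Type*} {f : α → α → α} (comm : ∀ p q, f p q = f q p)
    (left_comm : ∀ p q r, f p (f q r) = f q (f p r)) (p q r : α) :
    f (f p q) r = f p (f q r) :=
  calc
    f (f p q) r = f r (f p q) := comm _ _
    _ = f p (f r q) := left_comm _ _ _
    _ = f p (f q r) := by rw [comm r q]

section TripleLift

variable {R M : Type*} [Semiring R] [AddCommMonoid M] [Module R M]

/-- The linear map out of the free module `R × R × R` that sends the standard basis to `u, v, w`;
it serves to define linear maps by their values on the basis `1, ω, θ`. -/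
def tripleLift (u v w : M) : R × R × R →ₗ[R] M :=
  (LinearMap.toSpanSingleton R M u).coprod
    ((LinearMap.toSpanSingleton R M v).coprod (LinearMap.toSpanSingleton R M w))

theorem tripleLift_apply (u v w : M) (p : R × R × R) :
    tripleLift u v w p = p.1 • u + (p.2.1 • v + p.2.2 • w) :=
  rfl

end TripleLift

theorem commute_tripleLift_one {R A : Type*} [CommSemiring R] [Semiring A] [Algebra R A] {x y : A}
    (h : Commute x y) (p q : R × R × R) : Commute (tripleLift 1 x y p) (tripleLift 1 x y q) := by
  have commute_of_commute_generators {z : A} (hx : Commute z x) (hy : Commute z y)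
      (r : R × R × R) : Commute z (tripleLift 1 x y r) :=
    ((Commute.one_right z).smul_right r.1).add_right
      ((hx.smul_right r.2.1).add_right (hy.smul_right r.2.2))
  exact commute_of_commute_generators
    (commute_of_commute_generators (.refl x) h p).symm
    (commute_of_commute_generators h.symm (.refl y) p).symm q

section CubicMul

variable {R : Type*} [CommRing R] (a b c d : R)

/-- Multiplication by `ω`, given by the products `ω * 1`, `ω * ω` and `ω * θ`. -/
def mulOmega : Module.End R (R × R × R) :=
  tripleLift (0, 1, 0) (-(a * c), -b, a) (-(a * d), 0, 0)

/-- Multiplication by `θ`, given by the products `θ * 1`, `θ * ω` and `θ * θ`. -/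
def mulTheta : Module.End R (R × R × R) :=
  tripleLift (0, 0, 1) (-(a * d), 0, 0) (-(b * d), -d, c)

/-- The multiplication attached to the binary cubic form `a x³ + b x² y + c x y² + d y³`, as the
linear map taking a triple `x·1 + y·ω + z·θ` to the left multiplication by it. -/
def cubicMul : R × R × R →ₗ[R] Module.End R (R × R × R) :=
  tripleLift 1 (mulOmega a b c d) (mulTheta a b c d)

theorem commute_mulOmega_mulTheta : Commute (mulOmega a b c d) (mulTheta a b c d) := by
  ext <;>
    simp only [mulOmega, mulTheta, tripleLift_apply, Module.End.mul_apply, LinearMap.comp_apply,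
      LinearMap.inl_apply, LinearMap.inr_apply, Prod.fst_zero, Prod.snd_zero, Prod.smul_mk,
      Prod.mk_add_mk, smul_eq_mul] <;>
    ring

theorem cubicMul_apply (p q : R × R × R) :
    cubicMul a b c d p q =
      (p.1 * q.1 - a * c * (p.2.1 * q.2.1) - a * d * (p.2.1 * q.2.2 + p.2.2 * q.2.1)
          - b * d * (p.2.2 * q.2.2),
        p.1 * q.2.1 + p.2.1 * q.1 - b * (p.2.1 * q.2.1) - d * (p.2.2 * q.2.2),
        p.1 * q.2.2 + p.2.2 * q.1 + a * (p.2.1 * q.2.1) + c * (p.2.2 * q.2.2)) := by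
  ext <;>
    simp only [cubicMul, mulOmega, mulTheta, tripleLift_apply, LinearMap.add_apply,
      LinearMap.smul_apply, Module.End.one_apply, Prod.fst_add, Prod.snd_add, Prod.smul_fst,
      Prod.smul_snd, smul_eq_mul] <;>
    ring

theorem cubicMul_comm (p q : R × R × R) : cubicMul a b c d p q = cubicMul a b c d q p := by
  simp only [cubicMul_apply]
  ext <;> ring

theorem cubicMul_left_comm (p q r : R × R × R) :
    cubicMul a b c d p (cubicMul a b c d q r) = cubicMul a b c d q (cubicMul a b c d p r) :=
  LinearMap.congr_fun (commute_tripleLift_one (commute_mulOmega_mulTheta a b c d) p q).eq r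

theorem cubicMul_assoc (p q r : R × R × R) :
    cubicMul a b c d (cubicMul a b c d p q) r = cubicMul a b c d p (cubicMul a b c d q r) :=
  assoc_of_comm_of_left_comm (f := fun p q ↦ cubicMul a b c d p q) (cubicMul_comm a b c d)
    (cubicMul_left_comm a b c d) p q r

theorem one_cubicMul (p : R × R × R) : cubicMul a b c d (1, 0, 0) p = p := by
  simp [cubicMul, tripleLift_apply]

theorem cubicMul_one (p : R × R × R) : cubicMul a b c d p (1, 0, 0) = p := by
  rw [cubicMul_comm, one_cubicMul]

end CubicMul

/-- Levi–Delone–Faddeev: over a commutative ring `R`, the multiplication on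
the free module `R·1 ⊕ R·ω ⊕ R·θ` (triples `(x, y, z) = x·1 + y·ω + z·θ`) determined
`R`-bilinearly by `ω² = −ac·1 − b·ω + a·θ`, `ω·θ = θ·ω = −ad·1`, `θ² = −bd·1 − d·ω + c·θ`
and `1` being the identity, is commutative, associative and unital. -/
theorem stmt18 (R : Type*) [CommRing R] (a b c d : R)
    (mul : (R × R × R) → (R × R × R) → (R × R × R))
    (hmul : ∀ p q : R × R × R, mul p q =
      (p.1 * q.1 - a * c * (p.2.1 * q.2.1) - a * d * (p.2.1 * q.2.2 + p.2.2 * q.2.1)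
          - b * d * (p.2.2 * q.2.2),
        p.1 * q.2.1 + p.2.1 * q.1 - b * (p.2.1 * q.2.1) - d * (p.2.2 * q.2.2),
        p.1 * q.2.2 + p.2.2 * q.1 + a * (p.2.1 * q.2.1) + c * (p.2.2 * q.2.2))) :
    (∀ p q : R × R × R, mul p q = mul q p)
      ∧ (∀ p q r : R × R × R, mul (mul p q) r = mul p (mul q r))
      ∧ (∀ p : R × R × R, mul (1, 0, 0) p = p)
      ∧ (∀ p : R × R × R, mul p (1, 0, 0) = p) := by
  obtain rfl : mul = fun p q ↦ cubicMul a b c d p q := by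
    funext p q
    rw [hmul, cubicMul_apply]
  exact ⟨cubicMul_comm a b c d, cubicMul_assoc a b c d, one_cubicMul a b c d,
    cubicMul_one a b c d⟩
end
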